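/- arXiv:2206.12776 — 2 statements merged into one kernel-verified Lean document; each statement's English description precedes it below -/
import Mathlib

section
/- There exists a non-degenerate rigid dendrite; that is, there exists a non-degenerate locally connected continuum X containing no subspace homeomorphic to the circle, such that the only homeomorphism h : X → X is the identity. -/
/-!
# A rigid dendrite

The dendrite is built inside the Hilbert cube by attaching arcs one after the other, the `j`-th arc
moving the `j`-th coordinate.  With `attach j` the point where the `j`-th arc is attached (a point
of the tree built so far, whose coordinates vanish from the `j`-th on), the dendrite is the compact
set of all `x` with `x j ∈ [0,1]` such that `x j ≠ 0` forces `x i = attach j i` for all `i < j`.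
The attaching points are chosen so that they are dense, and so that each of them receives a number
`2 ^ n` of arcs which determines it (except the root `0`, from which only the initial arc starts).

Everything rests on one convexity fact, `isPreconnected_box`: a product of intervals meets the
dendrite in a connected set.  It yields connectedness and local connectedness at once.  It also
shows that the complement of the branch point with code `n` falls into exactly `2 ^ n + 2`
connected open pieces (`branch`, `iUnion_branch`), because each piece is cut out by an inequality on
a single coordinate, while the complement of any other point is covered by two connected sets
(`exists_two_cover`).  Counting these pieces, every homeomorphism fixes all branch points
(`homeomorph_branchPt`), and these are dense (`dendrite_subset_closure`), so it is the identity.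

A circle has no cut point, but two distinct points of the dendrite differ in some coordinate `k`,
and for all but countably many values `r` strictly between their `k`-th coordinates, `x k = r` has
at most one solution in the dendrite.  Removing that solution would disconnect a circle through the
two points (`no_circle`).
-/

open Set Topology

noncomputable section

namespace SmoothFanPaper

/-- `A` is an arc (a homeomorphic copy of `[0,1]`) with endpoints `a` and `b`. -/
def IsArc {α : Type*} [TopologicalSpace α] (A : Set α) (a b : α) : Prop :=
  ∃ h : (Set.Icc (0:ℝ) 1) ≃ₜ A,
    (h ⟨0, Set.left_mem_Icc.mpr zero_le_one⟩ : α) = a ∧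
    (h ⟨1, Set.right_mem_Icc.mpr zero_le_one⟩ : α) = b

/-- The order of `x` in `X` is at least `n`: there are `n` arcs contained in `X`, each with
`x` as an endpoint, which pairwise meet only in `x`. -/
def OrderAtLeast {α : Type*} [TopologicalSpace α] (X : Set α) (x : α) (n : ℕ) : Prop :=
  ∃ A : Fin n → Set α, (∀ i, A i ⊆ X) ∧ (∀ i, ∃ b, IsArc (A i) x b) ∧
    ∀ i j, i ≠ j → A i ∩ A j = {x}

/-- The set of endpoints of `X`: points of order exactly `1`. -/
def Endpoints {α : Type*} [TopologicalSpace α] (X : Set α) : Set α :=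
  {x | x ∈ X ∧ OrderAtLeast X x 1 ∧ ¬ OrderAtLeast X x 2}

/-- The Cantor fan: the union of all straight-line segments from the origin to the points of
`cantorSet × {1}` in the plane. -/
def CantorFan : Set (ℝ × ℝ) :=
  {q | ∃ c ∈ cantorSet, ∃ t ∈ Set.Icc (0:ℝ) 1, q = (t * c, t)}

/-- The cone point of the Cantor fan. -/
def fanVertex : ℝ × ℝ := (0, 0)

/-- A smooth fan: a non-degenerate subcontinuum of the Cantor fan containing the cone point,
whose cone point (the vertex) has order at least 2.  (Every statement below about smooth fans
is invariant under homeomorphisms, so we may realize all smooth fans concretely as such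
subcontinua.) -/
structure IsSmoothFan (X : Set (ℝ × ℝ)) : Prop where
  subset_fan : X ⊆ CantorFan
  isCompact : IsCompact X
  isConnected : IsConnected X
  nondegenerate : ∃ x ∈ X, ∃ y ∈ X, x ≠ y
  vertex_mem : fanVertex ∈ X
  vertex_order : OrderAtLeast X fanVertex 2

/-- Two subsets of `(0,1)` are order isomorphic if some order preserving self-homeomorphism
of `[0,1]` maps one onto the other. -/
def OrderIsomorphic (A B : Set ℝ) : Prop :=
  ∃ h : (Set.Icc (0:ℝ) 1) ≃ₜ (Set.Icc (0:ℝ) 1), StrictMono h ∧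
    Subtype.val '' (⇑h '' (Subtype.val ⁻¹' A)) = B

/-- The canonical parametrization of (subsets of) the leg of the Cantor fan through `e`:
a point of the leg is sent to its height, rescaled so that `e` is at height `1`. -/
def legParam (e : ℝ × ℝ) (S : Set (ℝ × ℝ)) : Set ℝ :=
  (fun q : ℝ × ℝ => q.2 / e.2) '' S

/-- The trace of the closure of a set `T` on the open leg `pe ∖ {p, e}` (where `p` is the
vertex and `pe = segment ℝ p e` is the unique arc in a smooth fan from `p` to an endpoint
`e`), viewed as a subset of `(0,1)` via the canonical parametrization of the leg. -/
def legTrace (T : Set (ℝ × ℝ)) (e : ℝ × ℝ) : Set ℝ :=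
  legParam e ((closure T ∩ segment ℝ fanVertex e) \ {fanVertex, e})

/-- `K` enumerates a countably infinite set `𝒦` of compact subsets of `(0,1)`, no two of
which are order isomorphic. -/
def KFamily (K : ℕ → Set ℝ) : Prop :=
  (∀ n, IsCompact (K n) ∧ K n ⊆ Set.Ioo (0:ℝ) 1) ∧
    ∀ m n, m ≠ n → ¬ OrderIsomorphic (K m) (K n)

/-- `X` is a `𝒦`-fan with witnessing endpoint set `E_𝒦 = {e n : n ∈ ℕ}`. -/
structure IsKFan (K : ℕ → Set ℝ) (X : Set (ℝ × ℝ)) (e : ℕ → ℝ × ℝ) : Prop where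
  fan : IsSmoothFan X
  mem_endpoints : ∀ n, e n ∈ Endpoints X
  trace_iso : ∀ n, OrderIsomorphic (legTrace (Endpoints X) (e n)) (K n)
  trace_not_iso : ∀ x ∈ Endpoints X \ Set.range e, ∀ n,
    ¬ OrderIsomorphic (legTrace (Endpoints X) x) (K n)
  meets_closure : ∀ x ∈ Endpoints X \ Set.range e,
    ((closure (Set.range e) ∩ segment ℝ fanVertex x) \ {fanVertex}).Nonempty

/-- A smooth fan is endpoint rigid if every self-homeomorphism fixes every endpoint. -/
def EndpointRigid (X : Set (ℝ × ℝ)) : Prop :=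
  ∀ h : X ≃ₜ X, ∀ x : X, (x : ℝ × ℝ) ∈ Endpoints X → ((h x : X) : ℝ × ℝ) = (x : ℝ × ℝ)

/-- Complete Erdős space `𝔈_c`: the points of the Hilbert space `ℓ²` all of whose
coordinates lie in `{0} ∪ {1/m : m ≥ 1}`. -/
def ErdosSpace : Set (lp (fun _ : ℕ => ℝ) 2) :=
  {x | ∀ n : ℕ, x n = 0 ∨ ∃ m : ℕ, 0 < m ∧ x n = 1 / m}

/-- `z` is a point of zero-dimensionality of the space it lives in: it has a neighborhood
basis of clopen subsets. -/
def ZeroDimPointAt {α : Type*} [TopologicalSpace α] (z : α) : Prop :=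
  ∀ U ∈ nhds z, ∃ V : Set α, IsClopen V ∧ z ∈ V ∧ V ⊆ U
/-- `L₀^φ = {(x,y) : x ∈ C, 0 ≤ y ≤ φ(x)}`, over the Cantor set. -/
def L0 (φ : ℝ → ℝ) : Set (ℝ × ℝ) :=
  {q | q.1 ∈ cantorSet ∧ 0 ≤ q.2 ∧ q.2 ≤ φ q.1}

/-- `G₀^φ = {(x,φ(x)) : x ∈ C, φ(x) > 0}`, over the Cantor set. -/
def G0 (φ : ℝ → ℝ) : Set (ℝ × ℝ) :=
  {q | q.1 ∈ cantorSet ∧ 0 < q.2 ∧ q.2 = φ q.1}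

/-- The setoid on `L₀^φ` identifying the set `C × {0}` to a point. -/
def L0Setoid (φ : ℝ → ℝ) : Setoid (L0 φ) where
  r a b := a = b ∨ ((a : ℝ × ℝ).2 = 0 ∧ (b : ℝ × ℝ).2 = 0)
  iseqv := by
    constructor
    · exact fun _ => Or.inl rfl
    · rintro a b (rfl | ⟨h1, h2⟩)
      · exact Or.inl rfl
      · exact Or.inr ⟨h2, h1⟩
    · rintro a b c (rfl | ⟨h1, h2⟩) (rfl | ⟨h3, h4⟩)
      · exact Or.inl rfl
      · exact Or.inr ⟨h3, h4⟩
      · exact Or.inr ⟨h1, h2⟩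
      · exact Or.inr ⟨h1, h4⟩

/-- The quotient space `L₀^φ / (C × {0})`. -/
def L0Quot (φ : ℝ → ℝ) : Type := Quotient (L0Setoid φ)

instance (φ : ℝ → ℝ) : TopologicalSpace (L0Quot φ) :=
  inferInstanceAs (TopologicalSpace (Quotient (L0Setoid φ)))

/-- The quotient projection `L₀^φ → L₀^φ / (C × {0})`. -/
def L0Proj (φ : ℝ → ℝ) : L0 φ → L0Quot φ := Quotient.mk (L0Setoid φ)

/-- The setoid on `E × [0,1]` identifying `E × {0}` to a point. -/
def coneSetoid (E : Type*) : Setoid (E × Set.Icc (0:ℝ) 1) where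
  r a b := a = b ∨ ((a.2 : ℝ) = 0 ∧ (b.2 : ℝ) = 0)
  iseqv := by
    constructor
    · exact fun _ => Or.inl rfl
    · rintro a b (rfl | ⟨h1, h2⟩)
      · exact Or.inl rfl
      · exact Or.inr ⟨h2, h1⟩
    · rintro a b c (rfl | ⟨h1, h2⟩) (rfl | ⟨h3, h4⟩)
      · exact Or.inl rfl
      · exact Or.inr ⟨h3, h4⟩
      · exact Or.inr ⟨h1, h2⟩
      · exact Or.inr ⟨h1, h4⟩

/-- The cone over a space `E`: the quotient `(E × [0,1]) / (E × {0})`. -/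
def Cone (E : Type*) [TopologicalSpace E] : Type _ := Quotient (coneSetoid E)

instance (E : Type*) [TopologicalSpace E] : TopologicalSpace (Cone E) :=
  inferInstanceAs (TopologicalSpace (Quotient (coneSetoid E)))

/-- A point of the one-point compactification of the disjoint union of the fans `X i`
is to be glued iff it is `∞` or the vertex of one of the fans. -/
def isGluedPoint {ι : Type*} (X : ι → Set (ℝ × ℝ)) :
    OnePoint (Σ i : ι, X i) → Prop :=
  fun a => a.elim True (fun q => (q.2 : ℝ × ℝ) = fanVertex)

/-- The setoid gluing the vertices (and the point at infinity) of the fans `X i`. -/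
def fanSumSetoid {ι : Type*} (X : ι → Set (ℝ × ℝ)) :
    Setoid (OnePoint (Σ i : ι, X i)) where
  r a b := a = b ∨ (isGluedPoint X a ∧ isGluedPoint X b)
  iseqv := by
    constructor
    · exact fun _ => Or.inl rfl
    · rintro a b (rfl | ⟨h1, h2⟩)
      · exact Or.inl rfl
      · exact Or.inr ⟨h2, h1⟩
    · rintro a b c (rfl | ⟨h1, h2⟩) (rfl | ⟨h3, h4⟩)
      · exact Or.inl rfl
      · exact Or.inr ⟨h3, h4⟩
      · exact Or.inr ⟨h1, h2⟩
      · exact Or.inr ⟨h1, h4⟩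

/-- The sum `Σᵢ Xᵢ` of a (finite or countably infinite) family of smooth fans: the quotient of
the one-point compactification of their disjoint union identifying the set consisting of all
the vertices and the point at infinity to a single point.  (For a finite family, `∞` is an
isolated point which is absorbed by the vertex class, so this agrees with the quotient of the
plain disjoint union identifying the vertices.) -/
def FanSum {ι : Type*} (X : ι → Set (ℝ × ℝ)) : Type _ := Quotient (fanSumSetoid X)

instance {ι : Type*} (X : ι → Set (ℝ × ℝ)) : TopologicalSpace (FanSum X) :=
  inferInstanceAs (TopologicalSpace (Quotient (fanSumSetoid X)))

/-! ### The attaching points -/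

theorem exists_ratio : ∃ r : ℕ → ℝ, Function.Injective r ∧ (∀ k, 0 < r k ∧ r k < 1) ∧
    Icc (0:ℝ) 1 ⊆ closure (range r) := by
  have : Infinite (Ioo (0:ℚ) 1) := Set.Ioo.infinite (by norm_num)
  obtain ⟨hd⟩ := nonempty_denumerable (Ioo (0:ℚ) 1)
  let e := (Denumerable.eqv (Ioo (0:ℚ) 1)).symm
  refine ⟨fun k => ((e k : ℚ) : ℝ), ?_, ?_, ?_⟩
  · intro a b hab
    have h1 : ((e a : ℚ) : ℝ) = ((e b : ℚ) : ℝ) := hab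
    exact e.injective (Subtype.ext (Rat.cast_injective h1))
  · intro k
    have h := (e k).2
    exact ⟨Rat.cast_pos.2 h.1, by simpa using (Rat.cast_lt (K := ℝ)).2 h.2⟩
  · rw [← closure_Ioo (zero_ne_one' ℝ)]
    refine closure_minimal ?_ isClosed_closure
    intro x hx
    rw [Metric.mem_closure_iff]
    intro ε hε
    obtain ⟨q, hq1, hq2⟩ := exists_rat_btwn (show x < min (x + ε) 1 from
      lt_min (by linarith) hx.2)
    have h1 := hq2.trans_le (min_le_left _ _)
    have h2 := hq2.trans_le (min_le_right _ _)
    have hq : q ∈ Ioo (0:ℚ) 1 :=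
      ⟨by exact_mod_cast hx.1.trans hq1, by exact_mod_cast h2⟩
    refine ⟨q, ⟨e.symm ⟨q, hq⟩, by simp⟩, ?_⟩
    rw [Real.dist_eq, abs_sub_lt_iff]
    constructor <;> linarith

/-- An injective sequence in `(0,1)` whose closure is `[0,1]`. -/
def ratio : ℕ → ℝ := Classical.choose exists_ratio

theorem ratio_injective : Function.Injective ratio := (Classical.choose_spec exists_ratio).1

theorem ratio_pos (k : ℕ) : 0 < ratio k := ((Classical.choose_spec exists_ratio).2.1 k).1

theorem ratio_lt_one (k : ℕ) : ratio k < 1 := ((Classical.choose_spec exists_ratio).2.1 k).2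

theorem Icc_subset_closure_ratio : Icc (0:ℝ) 1 ⊆ closure (range ratio) :=
  (Classical.choose_spec exists_ratio).2.2

theorem unpair_log_lt (j : ℕ) : (Nat.unpair (Nat.log 2 (j + 1))).1 < j + 1 :=
  (Nat.unpair_left_le _).trans_lt (Nat.log_lt_self 2 (Nat.succ_ne_zero j))

/-- `attach j` is the point at which the `j`-th arc, the one moving the `j`-th coordinate, is
attached.  The initial arc starts at `0`.  For `j ≥ 1` the attaching point lies at height
`ratio k` on the `l`-th arc, where `(l, k) = Nat.unpair (Nat.log 2 j)`; as `Nat.log 2` takes the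
value `n` at exactly `2 ^ n` indices `j ≥ 1`, the branch point with code `n` receives `2 ^ n`
arcs. -/
def attach : ℕ → ℕ → ℝ
  | 0 => 0
  | j + 1 => Function.update (attach (Nat.unpair (Nat.log 2 (j + 1))).1)
      (Nat.unpair (Nat.log 2 (j + 1))).1 (ratio (Nat.unpair (Nat.log 2 (j + 1))).2)
  termination_by j => j
  decreasing_by exact unpair_log_lt j

/-- The branch point with code `n = Nat.pair l k`: the point at height `ratio k` on the
`l`-th arc. -/
def branchPt (n : ℕ) : ℕ → ℝ :=
  Function.update (attach (Nat.unpair n).1) (Nat.unpair n).1 (ratio (Nat.unpair n).2)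

theorem attach_zero : attach 0 = 0 := by rw [attach]

theorem attach_of_pos {j : ℕ} (hj : 0 < j) : attach j = branchPt (Nat.log 2 j) := by
  obtain ⟨i, rfl⟩ : ∃ i, j = i + 1 := ⟨j - 1, by omega⟩
  rw [attach, branchPt]

theorem attach_eq_zero_of_le (j : ℕ) : ∀ i, j ≤ i → attach j i = 0 := by
  induction j using Nat.strong_induction_on with
  | _ j ih =>
    intro i hi
    rcases Nat.eq_zero_or_pos j with rfl | hj
    · simp [attach_zero]
    · obtain ⟨m, rfl⟩ : ∃ m, j = m + 1 := ⟨j - 1, by omega⟩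
      have hlt := unpair_log_lt m
      rw [attach_of_pos hj, branchPt, Function.update_of_ne (by omega)]
      exact ih _ hlt i (by omega)

theorem branchPt_self (n : ℕ) : branchPt n (Nat.unpair n).1 = ratio (Nat.unpair n).2 := by
  simp [branchPt]

theorem branchPt_of_lt {n i : ℕ} (h : i < (Nat.unpair n).1) :
    branchPt n i = attach (Nat.unpair n).1 i := by
  rw [branchPt, Function.update_of_ne (by omega)]

theorem branchPt_of_gt {n i : ℕ} (h : (Nat.unpair n).1 < i) : branchPt n i = 0 := by
  rw [branchPt, Function.update_of_ne (by omega)]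
  exact attach_eq_zero_of_le _ _ h.le

theorem branchPt_injective : Function.Injective branchPt := by
  intro m n h
  have hl : (Nat.unpair m).1 = (Nat.unpair n).1 := by
    rcases lt_trichotomy (Nat.unpair m).1 (Nat.unpair n).1 with h1 | h1 | h1
    · have h2 := branchPt_of_gt h1
      rw [h, branchPt_self] at h2
      exact absurd h2 (ratio_pos _).ne'
    · exact h1
    · have h2 := branchPt_of_gt h1
      rw [← h, branchPt_self] at h2
      exact absurd h2 (ratio_pos _).ne'
  have hk : (Nat.unpair m).2 = (Nat.unpair n).2 := by
    apply ratio_injective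
    rw [← branchPt_self m, ← branchPt_self n, h, hl]
  rw [← Nat.pair_unpair m, ← Nat.pair_unpair n, hl, hk]

/-! ### The dendrite -/

/-- The rigid dendrite, inside the Hilbert cube: the `j`-th coordinate of a point may be nonzero
only if the previous coordinates are those of the attaching point of the `j`-th arc. -/
def dendrite : Set (ℕ → ℝ) :=
  {x | ∀ j, x j ∈ Icc (0:ℝ) 1 ∧ (x j = 0 ∨ ∀ i < j, x i = attach j i)}

theorem eq_attach_of_ne_zero {x : ℕ → ℝ} (hx : x ∈ dendrite) {i j : ℕ} (hj : x j ≠ 0) (hi : i < j) :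
    x i = attach j i := ((hx j).2.resolve_left hj) i hi

theorem isCompact_dendrite : IsCompact dendrite := by
  have hcl : IsClosed dendrite := by
    have : dendrite = ⋂ j, ({x : ℕ → ℝ | x j ∈ Icc (0:ℝ) 1} ∩
        ({x | x j = 0} ∪ ⋂ i, ⋂ (_ : i < j), {x | x i = attach j i})) := by
      ext x; simp [dendrite]
    rw [this]
    refine isClosed_iInter fun j => (isClosed_Icc.preimage (continuous_apply j)).inter
      ((isClosed_eq (continuous_apply j) continuous_const).union ?_)
    exact isClosed_iInter fun i => isClosed_iInter fun _ =>
      isClosed_eq (continuous_apply i) continuous_const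
  refine (isCompact_univ_pi fun _ : ℕ => isCompact_Icc (a := (0:ℝ)) (b := 1)).of_isClosed_subset
    hcl ?_
  intro x hx j _
  exact (hx j).1

/-- If `x` in the dendrite vanishes from the `j`-th coordinate on, and `y` agrees with `x` before
`j` but moves along the `j`-th arc, then that arc is attached at `x`. -/
theorem attach_eq_of_first_diff {x y : ℕ → ℝ} (hy : y ∈ dendrite) {j : ℕ}
    (hlt : ∀ i < j, y i = x i) (hx : ∀ i, j ≤ i → x i = 0) (hyj : y j ≠ 0) : attach j = x := by
  funext i
  rcases lt_or_ge i j with h | h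
  · rw [← eq_attach_of_ne_zero hy hyj h, hlt i h]
  · rw [hx i h, attach_eq_zero_of_le j i h]

theorem update_mem_dendrite {x : ℕ → ℝ} (hx : x ∈ dendrite) {l : ℕ}
    (hgt : ∀ i, l < i → x i = 0) {t : ℝ} (ht : t ∈ Icc (0:ℝ) 1)
    (hpre : t = 0 ∨ ∀ i < l, x i = attach l i) : Function.update x l t ∈ dendrite := by
  intro j
  rcases lt_trichotomy j l with h | rfl | h
  · rw [Function.update_of_ne h.ne]
    refine ⟨(hx j).1, (hx j).2.imp_right fun hh i hi => ?_⟩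
    rw [Function.update_of_ne (by omega), hh i hi]
  · rw [Function.update_self]
    refine ⟨ht, hpre.imp_right fun hh i hi => ?_⟩
    rw [Function.update_of_ne (by omega), hh i hi]
  · rw [Function.update_of_ne h.ne', hgt j h]
    exact ⟨by simp, Or.inl rfl⟩

theorem attach_mem (j : ℕ) : attach j ∈ dendrite := by
  induction j using Nat.strong_induction_on with
  | _ j ih =>
    rcases Nat.eq_zero_or_pos j with rfl | hj
    · rw [attach_zero]
      intro j
      simp
    · obtain ⟨m, rfl⟩ : ∃ m, j = m + 1 := ⟨j - 1, by omega⟩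
      rw [attach_of_pos hj, branchPt]
      exact update_mem_dendrite (ih _ (unpair_log_lt m))
        (fun _ hi => attach_eq_zero_of_le _ _ hi.le) ⟨(ratio_pos _).le, (ratio_lt_one _).le⟩
        (Or.inr fun _ _ => rfl)

theorem update_attach_mem (l : ℕ) {t : ℝ} (ht : t ∈ Icc (0:ℝ) 1) :
    Function.update (attach l) l t ∈ dendrite :=
  update_mem_dendrite (attach_mem l) (fun _ hi => attach_eq_zero_of_le _ _ hi.le) ht
    (Or.inr fun _ _ => rfl)

theorem branchPt_mem (n : ℕ) : branchPt n ∈ dendrite :=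
  update_attach_mem _ ⟨(ratio_pos _).le, (ratio_lt_one _).le⟩

/-! ### Boxes meet the dendrite in connected sets -/

/-- The factor by which the path that prunes a point towards `0` scales the `i`-th coordinate at
time `s`: it is `1` up to time `1/(i+2)` and `0` from time `1/(i+1)` on. -/
def fade (i : ℕ) (s : ℝ) : ℝ :=
  max 0 (min 1 ((1 / (i + 1) - s) * ((i + 1) * (i + 2))))

theorem continuous_fade (i : ℕ) : Continuous (fade i) := by
  unfold fade; fun_prop

theorem fade_nonneg (i : ℕ) (s : ℝ) : 0 ≤ fade i s := le_max_left _ _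

theorem fade_le_one (i : ℕ) (s : ℝ) : fade i s ≤ 1 := max_le zero_le_one (min_le_left _ _)

theorem fade_eq_one {i : ℕ} {s : ℝ} (h : s ≤ 1 / (i + 2)) : fade i s = 1 := by
  have h1 : (1:ℝ) ≤ (1 / (i + 1) - s) * ((i + 1) * (i + 2)) := by
    calc (1:ℝ) = (1 / (i + 1) - 1 / (i + 2)) * ((i + 1) * (i + 2)) := by field_simp; ring
      _ ≤ _ := by gcongr
  rw [fade, min_eq_left h1, max_eq_right zero_le_one]

theorem fade_eq_zero {i : ℕ} {s : ℝ} (h : 1 / (i + 1) ≤ s) : fade i s = 0 := by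
  refine max_eq_left ((min_le_right _ _).trans ?_)
  exact mul_nonpos_of_nonpos_of_nonneg (by linarith) (by positivity)

/-- The path pruning `x` towards `0`. -/
def prune (x : ℕ → ℝ) (s : ℝ) : ℕ → ℝ := fun i => x i * fade i s

theorem prune_mem {x : ℕ → ℝ} (hx : x ∈ dendrite) (s : ℝ) : prune x s ∈ dendrite := by
  intro j
  have h0 := (hx j).1
  refine ⟨⟨mul_nonneg h0.1 (fade_nonneg _ _),
    mul_le_one₀ h0.2 (fade_nonneg _ _) (fade_le_one _ _)⟩, ?_⟩
  by_cases hj : prune x s j = 0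
  · exact Or.inl hj
  right
  intro i hi
  have hs : s < 1 / (j + 1) := by
    by_contra hcon
    exact hj (by rw [prune, fade_eq_zero (not_lt.1 hcon), mul_zero])
  have hij : (i:ℝ) + 1 ≤ j := by exact_mod_cast hi
  have hs' : s ≤ 1 / (i + 2) := hs.le.trans (one_div_le_one_div_of_le (by positivity) (by linarith))
  have hxj : x j ≠ 0 := fun h => hj (by rw [prune, h, zero_mul])
  rw [prune, fade_eq_one hs', mul_one, eq_attach_of_ne_zero hx hxj hi]

/-- A convexity property: the dendrite meets every product of intervals in a connected set.
Given two points with first difference at `k`, later coordinates cannot both be nonzero, so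
pruning both points down to their first `k + 1` coordinates stays in the box, and the two pruned
points differ in the `k`-th coordinate only. -/
theorem isPreconnected_box (J : ℕ → Set ℝ) (hJ : ∀ i, (J i).OrdConnected) :
    IsPreconnected (dendrite ∩ univ.pi J) := by
  classical
  refine isPreconnected_of_forall_pair ?_
  rintro x ⟨hx, hxJ⟩ z ⟨hz, hzJ⟩
  by_cases hxz : x = z
  · subst hxz
    exact ⟨{x}, singleton_subset_iff.2 ⟨hx, hxJ⟩, rfl, rfl, isPreconnected_singleton⟩
  have hex : ∃ k, x k ≠ z k := Function.ne_iff.1 hxz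
  let k := Nat.find hex
  have hk : x k ≠ z k := Nat.find_spec hex
  have hlt : ∀ i < k, x i = z i := fun i hi => not_not.1 (Nat.find_min hex hi)
  have hdisj : ∀ i, k < i → x i = 0 ∨ z i = 0 := by
    intro i hi
    by_contra! hcon
    exact hk (by rw [eq_attach_of_ne_zero hx hcon.1 hi, eq_attach_of_ne_zero hz hcon.2 hi])
  let A : (ℕ → ℝ) → Set (ℕ → ℝ) := fun x => prune x '' Icc 0 (1 / (k + 2))
  have hApre : ∀ x, IsPreconnected (A x) := fun x =>
    isPreconnected_Icc.image _ (Continuous.continuousOn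
      (continuous_pi fun i => continuous_const.mul (continuous_fade i)))
  have hstart : ∀ x, x ∈ A x := by
    intro x
    refine ⟨0, ⟨le_rfl, by positivity⟩, ?_⟩
    funext i
    rw [prune, fade_eq_one (by positivity), mul_one]
  have hlow : ∀ (x : ℕ → ℝ) (s : ℝ), s ≤ 1 / (k + 2) → ∀ i ≤ k, prune x s i = x i := by
    intro x s hs i hi
    have hik : (i:ℝ) ≤ k := by exact_mod_cast hi
    rw [prune, fade_eq_one (hs.trans (one_div_le_one_div_of_le (by positivity) (by linarith))),
      mul_one]
  have hAsub : ∀ x z : ℕ → ℝ, x ∈ dendrite → (∀ i, x i ∈ J i) → (∀ i, z i ∈ J i) →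
      (∀ i, k < i → x i = 0 ∨ z i = 0) → A x ⊆ dendrite ∩ univ.pi J := by
    rintro x z hx hxJ hzJ hd _ ⟨s, hs, rfl⟩
    refine ⟨prune_mem hx s, fun i _ => ?_⟩
    rcases le_or_gt i k with hi | hi
    · rw [hlow x s hs.2 i hi]; exact hxJ i
    · rcases hd i hi with h | h
      · have : prune x s i = x i := by simp [prune, h]
        rw [this]; exact hxJ i
      · have h0 : (0:ℝ) ∈ J i := h ▸ hzJ i
        have hx0 := (hx i).1.1
        exact (hJ i).out h0 (hxJ i)
          ⟨mul_nonneg hx0 (fade_nonneg _ _), mul_le_of_le_one_right hx0 (fade_le_one _ _)⟩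
  let y : ℕ → ℝ := prune x (1 / (k + 2))
  have hhigh : ∀ (x : ℕ → ℝ) (i : ℕ), k < i → prune x (1 / (k + 2)) i = 0 := by
    intro x i hi
    have hik : (k:ℝ) + 1 ≤ i := by exact_mod_cast hi
    rw [prune, fade_eq_zero (one_div_le_one_div_of_le (by positivity) (by linarith)), mul_zero]
  have hyA : y ∈ A x := ⟨_, ⟨by positivity, le_rfl⟩, rfl⟩
  have hyB := hAsub x z hx (fun i => hxJ i trivial) (fun i => hzJ i trivial) hdisj hyA
  let M : Set (ℕ → ℝ) := (fun t => Function.update y k t) '' uIcc (x k) (z k)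
  have hMpre : IsPreconnected M :=
    isPreconnected_uIcc.image _ (Continuous.continuousOn (by fun_prop))
  have hMsub : M ⊆ dendrite ∩ univ.pi J := by
    rintro _ ⟨t, ht, rfl⟩
    have ht01 : t ∈ Icc (0:ℝ) 1 := ordConnected_Icc.uIcc_subset (hx k).1 (hz k).1 ht
    refine ⟨update_mem_dendrite hyB.1 (hhigh x) ht01 ?_, ?_⟩
    · have hor : x k ≠ 0 ∨ z k ≠ 0 := by
        by_contra! hcon
        exact hk (hcon.1.trans hcon.2.symm)
      right
      intro i hi
      change prune x (1 / (k + 2)) i = attach k i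
      rw [hlow x _ le_rfl i hi.le]
      rcases hor with h | h
      · exact eq_attach_of_ne_zero hx h hi
      · rw [hlt i hi]; exact eq_attach_of_ne_zero hz h hi
    · intro i _
      change Function.update y k t i ∈ J i
      by_cases hik : i = k
      · rw [hik, Function.update_self]
        exact (hJ _).uIcc_subset (hxJ _ trivial) (hzJ _ trivial) ht
      · rw [Function.update_of_ne hik]; exact hyB.2 i trivial
  have hyM : y ∈ M := by
    refine ⟨x k, left_mem_uIcc, ?_⟩
    have : x k = y k := (hlow x _ le_rfl k le_rfl).symm
    simp [this]
  have hzM : prune z (1 / (k + 2)) ∈ M := by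
    refine ⟨z k, right_mem_uIcc, ?_⟩
    funext i
    change Function.update (prune x (1 / (k + 2))) k (z k) i = prune z (1 / (k + 2)) i
    rcases lt_trichotomy i k with h | h | h
    · rw [Function.update_of_ne h.ne, hlow z _ le_rfl i h.le, hlow x _ le_rfl i h.le, hlt i h]
    · rw [h, Function.update_self, hlow z _ le_rfl k le_rfl]
    · rw [Function.update_of_ne h.ne', hhigh x i h, hhigh z i h]
  refine ⟨(A x ∪ M) ∪ A z, union_subset (union_subset ?_ hMsub) ?_, Or.inl (Or.inl (hstart x)),
    Or.inr (hstart z), ?_⟩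
  · exact hAsub x z hx (fun i => hxJ i trivial) (fun i => hzJ i trivial) hdisj
  · exact hAsub z x hz (fun i => hzJ i trivial) (fun i => hxJ i trivial)
      fun i hi => (hdisj i hi).symm
  · exact ((hApre x).union y hyA hyM hMpre).union _ (Or.inr hzM)
      ⟨_, ⟨by positivity, le_rfl⟩, rfl⟩ (hApre z)

theorem isPreconnected_box_subtype (J : ℕ → Set ℝ) (hJ : ∀ i, (J i).OrdConnected) :
    IsPreconnected {x : dendrite | ∀ i, (x : ℕ → ℝ) i ∈ J i} := by
  rw [← Topology.IsInducing.subtypeVal.isPreconnected_image]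
  convert isPreconnected_box J hJ using 1
  ext x
  simp [and_comm]

theorem isPreconnected_coord (l : ℕ) {s : Set ℝ} (hs : s.OrdConnected) :
    IsPreconnected {x : dendrite | (x : ℕ → ℝ) l ∈ s} := by
  classical
  convert isPreconnected_box_subtype (fun i => if i = l then s else univ) ?_ using 1
  · ext x
    constructor
    · intro h i
      by_cases hi : i = l
      · subst hi; simpa using h
      · simp [hi]
    · intro h
      simpa using h l
  · intro i
    by_cases hi : i = l
    · simpa [hi] using hs
    · simpa [hi] using ordConnected_univ

theorem locallyConnected_dendrite : LocallyConnectedSpace dendrite := by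
  classical
  refine locallyConnectedSpace_of_connected_bases (ι := Set dendrite) (fun _ s => s)
    (fun x s => s ∈ 𝓝 x ∧ IsPreconnected s) (fun x => Filter.hasBasis_self.2 ?_)
    (fun _ _ h => h.2)
  intro U hU
  rw [nhds_subtype_eq_comap, Filter.mem_comap] at hU
  obtain ⟨W, hW, hWU⟩ := hU
  rw [nhds_pi, Filter.mem_pi] at hW
  obtain ⟨I, hI, t, ht, htW⟩ := hW
  choose ε hε hεt using fun i => Metric.mem_nhds_iff.1 (ht i)
  refine ⟨{y : dendrite | ∀ i, (y : ℕ → ℝ) i ∈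
    (if i ∈ I then Metric.ball ((x : ℕ → ℝ) i) (ε i) else univ)}, ?_,
    isPreconnected_box_subtype _ ?_, ?_⟩
  · have hopen : ∀ i ∈ I, {y : dendrite | (y : ℕ → ℝ) i ∈
        Metric.ball ((x : ℕ → ℝ) i) (ε i)} ∈ 𝓝 x := by
      intro i _
      exact ((continuous_apply i).comp continuous_subtype_val).continuousAt.preimage_mem_nhds
        (Metric.ball_mem_nhds _ (hε i))
    filter_upwards [(Filter.biInter_mem hI).2 hopen] with y hy i
    by_cases hi : i ∈ I
    · simpa [hi] using mem_iInter₂.1 hy i hi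
    · simp [hi]
  · intro i
    split_ifs
    · rw [Real.ball_eq_Ioo]; exact ordConnected_Ioo
    · exact ordConnected_univ
  · intro y hy
    refine hWU (htW fun i hi => hεt i ?_)
    simpa [hi] using hy i

/-! ### No circles -/

theorem isPreconnected_compl_singleton_circle (z : Circle) : IsPreconnected ({z}ᶜ : Set Circle) := by
  obtain ⟨θ, rfl⟩ : ∃ θ : ℝ, Circle.exp θ = z := ⟨_, Circle.exp_arg z⟩
  have : ({Circle.exp θ}ᶜ : Set Circle) = Circle.exp '' Ioo θ (θ + 2 * Real.pi) := by
    ext w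
    constructor
    · intro hw
      have hm := toIcoMod_mem_Ico Real.two_pi_pos θ (Complex.arg w)
      have he : Circle.exp (toIcoMod Real.two_pi_pos θ (Complex.arg w)) = w := by
        rw [toIcoMod, Circle.periodic_exp.sub_zsmul_eq, Circle.exp_arg]
      refine ⟨_, ⟨lt_of_le_of_ne hm.1 fun h => hw ?_, hm.2⟩, he⟩
      rw [mem_singleton_iff, ← he, ← h]
    · rintro ⟨φ, hφ, rfl⟩ h
      obtain ⟨m, hm⟩ := Circle.exp_eq_exp.1 (mem_singleton_iff.1 h)
      have h1 : (0:ℝ) < m := by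
        by_contra hcon
        nlinarith [hφ.1, Real.pi_pos]
      have h2 : (m:ℝ) < 1 := by
        by_contra hcon
        nlinarith [hφ.2, Real.pi_pos]
      have h3 : (0:ℤ) < m := by exact_mod_cast h1
      have h4 : m < (1:ℤ) := by exact_mod_cast h2
      omega
  rw [this]
  exact isPreconnected_Ioo.image _ Circle.exp.continuous.continuousOn

/-- Two points of a circle in the dendrite with different `k`-th coordinates are separated by a
single point: for all but countably many `r` between these two values, only one point of the
dendrite has `k`-th coordinate `r`. -/
theorem no_circle (S : Set dendrite) : ¬ Nonempty (S ≃ₜ Circle) := by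
  rintro ⟨φ⟩
  let f : Circle → dendrite := fun w => (φ.symm w : dendrite)
  have hf : Continuous f := continuous_subtype_val.comp φ.symm.continuous
  have hinj : Function.Injective f := Subtype.val_injective.comp φ.symm.injective
  have hab : (1 : Circle) ≠ Circle.exp Real.pi := by
    intro h
    have h1 := congrArg (fun z : Circle => (z : ℂ)) h
    norm_num [Circle.coe_exp, Complex.exp_pi_mul_I] at h1
  have hne : (f 1 : ℕ → ℝ) ≠ f (Circle.exp Real.pi) := fun h => hab (hinj (Subtype.ext h))
  obtain ⟨k, hk⟩ := Function.ne_iff.1 hne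
  let g : Circle → ℝ := fun w => (f w : ℕ → ℝ) k
  have hg : Continuous g := (continuous_apply k).comp (continuous_subtype_val.comp hf)
  obtain ⟨a, b, hlt⟩ : ∃ a b, g a < g b := by
    rcases lt_or_gt_of_ne hk with h | h
    · exact ⟨_, _, h⟩
    · exact ⟨_, _, h⟩
  obtain ⟨r, hrc, hr⟩ := ((countable_range fun j => attach j k).dense_compl ℝ).exists_between hlt
  have hrpos : r ≠ 0 := (((f a).2 k).1.1.trans_lt hr.1).ne'
  have huniq : ∀ x y : dendrite, (x : ℕ → ℝ) k = r → (y : ℕ → ℝ) k = r → x = y := by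
    have hlate : ∀ x : dendrite, (x : ℕ → ℝ) k = r → ∀ i, k < i → (x : ℕ → ℝ) i = 0 := by
      intro x hx i hi
      by_contra hcon
      exact hrc ⟨i, by rw [← hx]; exact (eq_attach_of_ne_zero x.2 hcon hi).symm⟩
    intro x y hx hy
    apply Subtype.ext
    funext i
    rcases lt_trichotomy i k with h | h | h
    · rw [eq_attach_of_ne_zero x.2 (by rwa [hx]) h, eq_attach_of_ne_zero y.2 (by rwa [hy]) h]
    · rw [h, hx, hy]
    · rw [hlate x hx i h, hlate y hy i h]
  have hpre : IsPreconnected {w : Circle | g w ≠ r} := by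
    obtain ⟨w, -, hw⟩ := isPreconnected_univ.intermediate_value (mem_univ a) (mem_univ b)
      hg.continuousOn ⟨hr.1.le, hr.2.le⟩
    convert isPreconnected_compl_singleton_circle w using 1
    ext v
    constructor
    · rintro hv rfl
      exact hv hw
    · intro hv hv'
      exact hv (hinj (huniq _ _ hv' hw))
  obtain ⟨w, hw, hw'⟩ := hpre.intermediate_value (show a ∈ {w | g w ≠ r} from hr.1.ne)
    (show b ∈ {w | g w ≠ r} from hr.2.ne') hg.continuousOn ⟨hr.1.le, hr.2.le⟩
  exact hw hw'

/-! ### Counting the complementary components of points -/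

/-- A space that splits into disjoint nonempty open sets indexed by `ι` cannot be covered by
fewer preconnected sets. -/
theorem card_le_of_preconnected_cover {Y ι κ : Type*} [TopologicalSpace Y] [Fintype ι] [Fintype κ]
    (U : ι → Set Y) (V : κ → Set Y) (hUo : ∀ i, IsOpen (U i))
    (hUd : ∀ i j, i ≠ j → Disjoint (U i) (U j)) (hUne : ∀ i, (U i).Nonempty)
    (hV : ∀ k, IsPreconnected (V k)) (hVU : ∀ k, V k ⊆ ⋃ i, U i) (hUV : ∀ i, U i ⊆ ⋃ k, V k) :
    Fintype.card ι ≤ Fintype.card κ := by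
  choose y hy using hUne
  choose c hc using fun i => mem_iUnion.1 (hUV i (hy i))
  refine Fintype.card_le_of_injective c fun i j hij => ?_
  by_contra hne
  have hsub : V (c i) ⊆ U i := by
    refine (hV (c i)).subset_left_of_subset_union (hUo i)
      (v := ⋃ m ∈ {m | m ≠ i}, U m) (isOpen_biUnion fun m _ => hUo m) ?_ ?_ ⟨y i, hc i, hy i⟩
    · exact disjoint_iUnion₂_right.2 fun m hm => hUd i m (Ne.symm hm)
    · intro w hw
      obtain ⟨m, hm⟩ := mem_iUnion.1 (hVU _ hw)
      by_cases hmi : m = i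
      · left; rwa [← hmi]
      · right; exact mem_biUnion (show m ∈ {m | m ≠ i} from hmi) hm
  have hyj : y j ∈ U i := hsub (hij ▸ hc j)
  exact disjoint_left.1 (hUd i j hne) hyj (hy j)

/-- The components of the complement of the branch point with code `n`: the part of the dendrite
below this point, the part above it along its own arc, and the parts hanging on the `2 ^ n` arcs
attached at it, which are those with index in `[2 ^ n, 2 ^ (n + 1))`. -/
def branch (n : ℕ) : Option (Option (Fin (2 ^ n))) → Set dendrite
  | none => {x | (x : ℕ → ℝ) (Nat.unpair n).1 ∈ Iio (ratio (Nat.unpair n).2)}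
  | some none => {x | (x : ℕ → ℝ) (Nat.unpair n).1 ∈ Ioi (ratio (Nat.unpair n).2)}
  | some (some a) => {x | (x : ℕ → ℝ) (2 ^ n + a) ∈ Ioi 0}

theorem isOpen_coord (l : ℕ) {s : Set ℝ} (hs : IsOpen s) :
    IsOpen {x : dendrite | (x : ℕ → ℝ) l ∈ s} :=
  hs.preimage ((continuous_apply l).comp continuous_subtype_val)

theorem isOpen_branch (n : ℕ) : ∀ i, IsOpen (branch n i)
  | none => isOpen_coord _ isOpen_Iio
  | some none => isOpen_coord _ isOpen_Ioi
  | some (some _) => isOpen_coord _ isOpen_Ioi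

theorem isPreconnected_branch (n : ℕ) : ∀ i, IsPreconnected (branch n i)
  | none => isPreconnected_coord _ ordConnected_Iio
  | some none => isPreconnected_coord _ ordConnected_Ioi
  | some (some _) => isPreconnected_coord _ ordConnected_Ioi

theorem attach_two_pow_add (n : ℕ) (a : Fin (2 ^ n)) : attach (2 ^ n + a) = branchPt n := by
  have ha := a.2
  have h : Nat.log 2 (2 ^ n + a) = n :=
    Nat.log_eq_of_pow_le_of_lt_pow (by omega) (by rw [pow_succ]; omega)
  rw [attach_of_pos (by positivity), h]

theorem unpair_lt_two_pow_add (n a : ℕ) : (Nat.unpair n).1 < 2 ^ n + a :=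
  ((Nat.unpair_left_le n).trans_lt Nat.lt_two_pow_self).trans_le (Nat.le_add_right _ _)

theorem branch_nonempty (n : ℕ) : ∀ i, (branch n i).Nonempty
  | none => ⟨⟨_, attach_mem (Nat.unpair n).1⟩, by
      change attach _ _ < _
      rw [attach_eq_zero_of_le _ _ le_rfl]; exact ratio_pos _⟩
  | some none => ⟨⟨_, update_attach_mem (Nat.unpair n).1 (right_mem_Icc.2 zero_le_one)⟩, by
      change _ < Function.update (attach (Nat.unpair n).1) (Nat.unpair n).1 1 (Nat.unpair n).1
      rw [Function.update_self]; exact ratio_lt_one _⟩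
  | some (some a) => ⟨⟨_, update_attach_mem (2 ^ n + a) (right_mem_Icc.2 zero_le_one)⟩, by
      change 0 < Function.update (attach (2 ^ n + a)) (2 ^ n + a) 1 (2 ^ n + (a : ℕ))
      rw [Function.update_self]; exact one_pos⟩

theorem apply_of_mem_branch {n : ℕ} {a : Fin (2 ^ n)} {x : dendrite}
    (hx : x ∈ branch n (some (some a))) {i : ℕ} (hi : i < 2 ^ n + a) :
    (x : ℕ → ℝ) i = branchPt n i := by
  rw [← attach_two_pow_add n a]
  exact eq_attach_of_ne_zero x.2 (ne_of_gt hx) hi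

theorem branch_disjoint (n : ℕ) (i j : Option (Option (Fin (2 ^ n)))) (hij : i ≠ j) :
    Disjoint (branch n i) (branch n j) := by
  have hself : ∀ (a : Fin (2 ^ n)) (x : dendrite), x ∈ branch n (some (some a)) →
      (x : ℕ → ℝ) (Nat.unpair n).1 = ratio (Nat.unpair n).2 := fun a x hx => by
    rw [apply_of_mem_branch hx (unpair_lt_two_pow_add n a), branchPt_self]
  have hlt : ∀ (a b : Fin (2 ^ n)) (x : dendrite), x ∈ branch n (some (some a)) →
      x ∈ branch n (some (some b)) → ¬ a < b := fun a b x ha hb hab => by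
    have h := apply_of_mem_branch hb (i := 2 ^ n + a) (by have : (a:ℕ) < b := hab; omega)
    rw [branchPt_of_gt (unpair_lt_two_pow_add n a)] at h
    exact (ne_of_gt ha) h
  rw [disjoint_left]
  intro x hi hj
  have hlow : x ∈ branch n none → (x : ℕ → ℝ) (Nat.unpair n).1 < ratio (Nat.unpair n).2 := id
  have hup : x ∈ branch n (some none) →
      ratio (Nat.unpair n).2 < (x : ℕ → ℝ) (Nat.unpair n).1 := id
  rcases i with _ | _ | a <;> rcases j with _ | _ | b
  · exact hij rfl
  · exact lt_asymm (hlow hi) (hup hj)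
  · exact (hlow hi).ne (hself b x hj)
  · exact lt_asymm (hlow hj) (hup hi)
  · exact hij rfl
  · exact (hup hi).ne' (hself b x hj)
  · exact (hlow hj).ne (hself a x hi)
  · exact (hup hj).ne' (hself a x hi)
  · rcases lt_trichotomy a b with h | h | h
    · exact hlt a b x hi hj h
    · exact hij (by rw [h])
    · exact hlt b a x hj hi h

theorem exists_first_diff {x y : ℕ → ℝ} (h : x ≠ y) : ∃ j, x j ≠ y j ∧ ∀ i < j, x i = y i := by
  classical
  have hex : ∃ k, x k ≠ y k := Function.ne_iff.1 h
  exact ⟨Nat.find hex, Nat.find_spec hex, fun i hi => not_not.1 (Nat.find_min hex hi)⟩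

/-- If the last nonzero coordinate of `x` is the `l`-th, and `y ≠ x` agrees with `x` in that
coordinate, then `y` lies on one of the arcs attached at `x`, or beyond it. -/
theorem exists_attach_eq {x y : ℕ → ℝ} (hx : x ∈ dendrite) (hy : y ∈ dendrite) {l : ℕ}
    (hl : x l ≠ 0) (hgt : ∀ i, l < i → x i = 0) (hxy : y ≠ x) (he : y l = x l) :
    ∃ j, 0 < j ∧ attach j = x ∧ 0 < y j := by
  obtain ⟨j, hj, hlt⟩ := exists_first_diff hxy
  have hlj : l < j := by
    rcases lt_trichotomy l j with h | h | h
    · exact h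
    · exact absurd (h ▸ he) hj
    · exact absurd (by rw [eq_attach_of_ne_zero hx hl h, eq_attach_of_ne_zero hy (he ▸ hl) h]) hj
  have hyj : y j ≠ 0 := by rwa [hgt j hlj] at hj
  exact ⟨j, by omega, attach_eq_of_first_diff hy hlt (fun i hi => hgt i (by omega)) hyj,
    (hy j).1.1.lt_of_ne' hyj⟩

theorem iUnion_branch (n : ℕ) : ⋃ i, branch n i = {(⟨branchPt n, branchPt_mem n⟩ : dendrite)}ᶜ := by
  have hl : branchPt n (Nat.unpair n).1 ≠ 0 := by rw [branchPt_self]; exact (ratio_pos _).ne'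
  ext y
  rw [mem_iUnion, mem_compl_singleton_iff]
  constructor
  · rintro ⟨i, hi⟩ rfl
    rcases i with _ | _ | a
    · exact (mem_Iio.1 hi).ne (branchPt_self n)
    · exact (mem_Ioi.1 hi).ne' (branchPt_self n)
    · exact (mem_Ioi.1 hi).ne' (branchPt_of_gt (unpair_lt_two_pow_add n a))
  · intro hy
    have hy' : (y : ℕ → ℝ) ≠ branchPt n := fun h => hy (Subtype.ext h)
    rcases lt_trichotomy ((y : ℕ → ℝ) (Nat.unpair n).1) (ratio (Nat.unpair n).2) with h | h | h
    · exact ⟨none, h⟩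
    · obtain ⟨j, hj0, hj, hyj⟩ := exists_attach_eq (branchPt_mem n) y.2 hl
        (fun i hi => branchPt_of_gt hi) hy' (by rw [h, branchPt_self])
      have hn : Nat.log 2 j = n := branchPt_injective (by rw [← attach_of_pos hj0, hj])
      obtain ⟨h1, h2⟩ := (Nat.log_eq_iff (Or.inr ⟨one_lt_two, hj0.ne'⟩)).1 hn
      refine ⟨some (some ⟨j - 2 ^ n, by rw [pow_succ] at h2; omega⟩), ?_⟩
      change 0 < (y : ℕ → ℝ) (2 ^ n + (j - 2 ^ n))
      rwa [Nat.add_sub_cancel' h1]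
    · exact ⟨some none, h⟩

/-- The complement of a point which is not a branch point has at most two components. -/
theorem exists_two_cover (x : dendrite) (hx : ∀ n, (x : ℕ → ℝ) ≠ branchPt n) :
    ∃ V : Bool → Set dendrite, (∀ b, IsPreconnected (V b)) ∧ ⋃ b, V b = {x}ᶜ := by
  have hpos : ∀ (y : dendrite) j, (y : ℕ → ℝ) j ≠ 0 → 0 < (y : ℕ → ℝ) j :=
    fun y j h => (y.2 j).1.1.lt_of_ne' h
  by_cases h0 : (x : ℕ → ℝ) = 0
  · refine ⟨fun _ => {y | (y : ℕ → ℝ) 0 ∈ Ioi 0},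
      fun _ => isPreconnected_coord _ ordConnected_Ioi, ?_⟩
    rw [iUnion_const]
    ext y
    rw [mem_compl_singleton_iff]
    constructor
    · rintro hy rfl
      exact (mem_Ioi.1 hy).ne' (congrFun h0 0)
    · intro hy
      obtain ⟨j, hj, hlt⟩ := exists_first_diff fun h => hy (Subtype.ext h)
      have hyj : (y : ℕ → ℝ) j ≠ 0 := by rwa [h0] at hj
      have hat := attach_eq_of_first_diff y.2 hlt (fun i _ => congrFun h0 i) hyj
      rcases Nat.eq_zero_or_pos j with rfl | hj0
      · exact hpos y 0 hyj
      · exact absurd (hat.symm.trans (attach_of_pos hj0)) (hx _)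
  by_cases hfin : ∃ l, (x : ℕ → ℝ) l ≠ 0 ∧ ∀ i, l < i → (x : ℕ → ℝ) i = 0
  · obtain ⟨l, hl, hgt⟩ := hfin
    refine ⟨fun b => {y | (y : ℕ → ℝ) l ∈
      (if b then Iio ((x : ℕ → ℝ) l) else Ioi ((x : ℕ → ℝ) l))}, ?_, ?_⟩
    · intro b
      refine isPreconnected_coord _ ?_
      split_ifs
      exacts [ordConnected_Iio, ordConnected_Ioi]
    · ext y
      rw [mem_iUnion, mem_compl_singleton_iff]
      constructor
      · rintro ⟨_ | _, hb⟩ rfl <;> simp at hb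
      · intro hy
        rcases lt_trichotomy ((y : ℕ → ℝ) l) ((x : ℕ → ℝ) l) with h | h | h
        · exact ⟨true, by simpa using h⟩
        · obtain ⟨j, hj0, hj, -⟩ := exists_attach_eq x.2 y.2 hl hgt
            (fun h => hy (Subtype.ext h)) h
          exact absurd (hj.symm.trans (attach_of_pos hj0)) (hx _)
        · exact ⟨false, by simpa using h⟩
  -- The support of `x` is infinite: then `x` is an end of the dendrite, and any two other points
  -- lie in a common connected set `{w | w m < x m}`.
  · push Not at hfin
    have hinf : ∀ k, ∃ m, k < m ∧ (x : ℕ → ℝ) m ≠ 0 := by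
      intro k
      induction k with
      | zero =>
        obtain ⟨m, hm⟩ := Function.ne_iff.1 h0
        obtain ⟨i, hi, hi'⟩ := hfin m hm
        exact ⟨i, by omega, hi'⟩
      | succ k ih =>
        obtain ⟨m, hm, hm'⟩ := ih
        obtain ⟨i, hi, hi'⟩ := hfin m hm'
        exact ⟨i, by omega, hi'⟩
    refine ⟨fun _ => {x}ᶜ, fun _ => isPreconnected_of_forall_pair ?_, iUnion_const _⟩
    intro y hy z hz
    obtain ⟨i, hi, -⟩ := exists_first_diff fun h => hy (Subtype.ext h)
    obtain ⟨j, hj, -⟩ := exists_first_diff fun h => hz (Subtype.ext h)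
    obtain ⟨m, hm, hxm⟩ := hinf (max i j)
    have hlow : ∀ (w : dendrite) k, k < m → (w : ℕ → ℝ) k ≠ (x : ℕ → ℝ) k →
        (w : ℕ → ℝ) m < (x : ℕ → ℝ) m := by
      intro w k hk hne
      have hw : (w : ℕ → ℝ) m = 0 := by
        by_contra hcon
        exact hne (by rw [eq_attach_of_ne_zero w.2 hcon hk, eq_attach_of_ne_zero x.2 hxm hk])
      rw [hw]; exact hpos x m hxm
    refine ⟨{w | (w : ℕ → ℝ) m ∈ Iio ((x : ℕ → ℝ) m)}, ?_,
      hlow y i ((le_max_left _ _).trans_lt hm) hi, hlow z j ((le_max_right _ _).trans_lt hm) hj,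
      isPreconnected_coord _ ordConnected_Iio⟩
    rintro w hw rfl
    exact lt_irrefl ((w : ℕ → ℝ) m) hw

/-! ### Rigidity -/

theorem card_le_of_homeomorph (h : dendrite ≃ₜ dendrite) (n : ℕ) {κ : Type*} [Fintype κ]
    (V : κ → Set dendrite) (hV : ∀ k, IsPreconnected (V k))
    (hVx : ⋃ k, V k = {h ⟨branchPt n, branchPt_mem n⟩}ᶜ) : 2 ^ n + 2 ≤ Fintype.card κ := by
  have hcov : ⋃ k, h ⁻¹' V k = {(⟨branchPt n, branchPt_mem n⟩ : dendrite)}ᶜ := by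
    rw [← preimage_iUnion, hVx]
    ext y
    simp
  have hcard := card_le_of_preconnected_cover (branch n) (fun k => h ⁻¹' V k) (isOpen_branch n)
    (branch_disjoint n) (branch_nonempty n) (fun k => h.isPreconnected_preimage.2 (hV k))
    (fun k => by rw [iUnion_branch, ← hcov]; exact subset_iUnion (fun k => h ⁻¹' V k) k)
    (fun i => by rw [hcov, ← iUnion_branch]; exact subset_iUnion _ i)
  rw [Fintype.card_option, Fintype.card_option, Fintype.card_fin] at hcard
  exact hcard

theorem le_of_homeomorph (h : dendrite ≃ₜ dendrite) {m n : ℕ}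
    (hmn : h ⟨branchPt n, branchPt_mem n⟩ = ⟨branchPt m, branchPt_mem m⟩) : n ≤ m := by
  have h1 := card_le_of_homeomorph h n (branch m) (isPreconnected_branch m)
    (by rw [iUnion_branch, hmn])
  simp only [Fintype.card_option, Fintype.card_fin] at h1
  exact (Nat.pow_le_pow_iff_right one_lt_two).1 (by omega)

/-- A homeomorphism fixes every branch point, as the complement of the branch point with code `n`
has exactly `2 ^ n + 2` components. -/
theorem homeomorph_branchPt (h : dendrite ≃ₜ dendrite) (n : ℕ) :
    h ⟨branchPt n, branchPt_mem n⟩ = ⟨branchPt n, branchPt_mem n⟩ := by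
  by_cases hx : ∀ m, (h ⟨branchPt n, branchPt_mem n⟩ : ℕ → ℝ) ≠ branchPt m
  · obtain ⟨V, hV, hVx⟩ := exists_two_cover _ hx
    have h1 := card_le_of_homeomorph h n V hV hVx
    have h2 : 0 < 2 ^ n := by positivity
    rw [Fintype.card_bool] at h1
    omega
  · push Not at hx
    obtain ⟨m, hm⟩ := hx
    have hmn : h ⟨branchPt n, branchPt_mem n⟩ = ⟨branchPt m, branchPt_mem m⟩ := Subtype.ext hm
    have hnm : h.symm ⟨branchPt m, branchPt_mem m⟩ = ⟨branchPt n, branchPt_mem n⟩ := by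
      rw [← hmn, h.symm_apply_apply]
    have := (le_of_homeomorph h hmn).antisymm (le_of_homeomorph h.symm hnm)
    subst this
    exact hmn

/-- Every point is the limit of its truncations, and the end of a truncation moves along an arc on
which the branch points are dense. -/
theorem dendrite_subset_closure : dendrite ⊆ closure (range branchPt) := by
  have harc : ∀ l, ∀ t ∈ Icc (0:ℝ) 1,
      Function.update (attach l) l t ∈ closure (range branchPt) := by
    intro l t ht
    have hc : Continuous fun t : ℝ => Function.update (attach l) l t := by fun_prop
    refine closure_mono ?_ (image_closure_subset_closure_image hc
      ⟨t, Icc_subset_closure_ratio ht, rfl⟩)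
    rintro _ ⟨_, ⟨k, rfl⟩, rfl⟩
    exact ⟨Nat.pair l k, by simp [branchPt]⟩
  intro x hx
  have htrunc : ∀ n, (fun i => if i < n then x i else 0) ∈ closure (range branchPt) := by
    intro n
    induction n with
    | zero =>
      have h := harc 0 0 (left_mem_Icc.2 zero_le_one)
      rw [attach_zero] at h
      convert h using 1
      funext i
      simp [Function.update_apply]
    | succ n ih =>
      by_cases hn : x n = 0
      · convert ih using 1
        funext i
        rcases lt_trichotomy i n with h | h | h
        · simp [h, h.trans (Nat.lt_succ_self n)]
        · simp [h, hn]
        · simp [show ¬ i < n + 1 by omega, show ¬ i < n by omega]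
      · convert harc n (x n) (hx n).1 using 1
        funext i
        rcases lt_trichotomy i n with h | h | h
        · rw [Function.update_of_ne h.ne, if_pos (by omega), eq_attach_of_ne_zero hx hn h]
        · simp [h]
        · rw [Function.update_of_ne h.ne', if_neg (by omega), attach_eq_zero_of_le _ _ h.le]
  refine isClosed_closure.mem_of_tendsto (f := fun n : ℕ => fun i => if i < n then x i else 0)
    (b := Filter.atTop) ?_ (Filter.Eventually.of_forall htrunc)
  rw [tendsto_pi_nhds]
  intro i
  refine tendsto_const_nhds.congr' ?_
  filter_upwards [Filter.eventually_gt_atTop i] with n hn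
  simp [hn]

theorem homeomorph_eq_id (h : dendrite ≃ₜ dendrite) (x : dendrite) : h x = x := by
  have hd : Dense (range fun n => (⟨branchPt n, branchPt_mem n⟩ : dendrite)) := by
    rw [Subtype.dense_iff]
    convert dendrite_subset_closure using 2
    ext x
    simp
  refine congrFun (Continuous.ext_on hd h.continuous continuous_id ?_) x
  rintro _ ⟨n, rfl⟩
  exact homeomorph_branchPt h n

/-- There exists a non-degenerate rigid dendrite: a non-degenerate
locally connected (metrizable) continuum containing no subspace homeomorphic to the circle,
whose only self-homeomorphism is the identity. -/
theorem exists_rigid_dendrite :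
    ∃ (X : Type) (_ : TopologicalSpace X),
      CompactSpace X ∧ ConnectedSpace X ∧ TopologicalSpace.MetrizableSpace X ∧
      Nontrivial X ∧ LocallyConnectedSpace X ∧
      (∀ S : Set X, ¬ Nonempty (S ≃ₜ Circle)) ∧
      (∀ h : X ≃ₜ X, ∀ x : X, h x = x) := by
  have hbox : IsPreconnected (univ : Set dendrite) := by
    simpa using isPreconnected_box_subtype (fun _ => univ) fun _ => ordConnected_univ
  have : PreconnectedSpace dendrite := ⟨hbox⟩
  have hne : Nonempty dendrite := ⟨⟨_, attach_mem 0⟩⟩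
  have hnt : Nontrivial dendrite := by
    refine ⟨⟨⟨branchPt 0, branchPt_mem 0⟩, ⟨branchPt 1, branchPt_mem 1⟩, fun h => ?_⟩⟩
    exact zero_ne_one (branchPt_injective (congrArg Subtype.val h))
  exact ⟨dendrite, inferInstance, isCompact_iff_compactSpace.1 isCompact_dendrite,
    ⟨hne⟩, inferInstance, hnt, locallyConnected_dendrite, no_circle, homeomorph_eq_id⟩

end SmoothFanPaper
end
end

section
/- No smooth fan is rigid: for every smooth fan X there exists a homeomorphism h : X → X that is not equal to the identity. -/
/-!
Write a fan `X` as `{(t c, t) : 0 ≤ t ≤ φ c}`, where `c` ranges over a compact zero-dimensional set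
`base X` of slopes and `φ = height X` is upper semicontinuous and positive on a dense set; legs
reach down to the vertex by connectedness (`IsFan.down`). Any continuous bijection of the region
under the graph of `φ` that preserves the zero section descends to a self-homeomorphism of `X`
(`IsFan.exists_homeo`). There are two cases.

* Some point of the open region under the graph has a neighbourhood missing the graph of `φ`. Then
  every leg passing through a small box around that point crosses it completely, and points inside
  the box can be moved upwards along their legs (`IsFan.exists_homeo_of_gap`).

* Otherwise `φ` is a Lelek function (`IsLelek`): every vertical segment under the graph lies in the
  closure of the graph. Then `X` is the Lelek fan, and any exchange of a clopen set of slopes with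
  its complement can be refined to a homeomorphism `g` of the base with `φ ∘ g = α φ` for a
  continuous `α > 0` (`IsLelek.exists_map`), so that `(c, t) ↦ (g c, α c * t)` works.

The refinement is a back-and-forth argument. Given a pair `(U, V)` of nonempty clopen sets,
partition `U` into small clopen pieces. The Lelek property yields, near a maximum point of `φ` on
`V`, disjoint clopen subsets of `V` whose heights are almost any prescribed values up to the
maximum; these are matched with the pieces of `U` that do not contain a chosen maximum point, and
the remainder of `V` with the piece that does. This hardly changes the ratio of maximal heights of
matched sets (`IsLelek.exists_splits_left`). Doing the same with the two sides exchanged and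
iterating gives a sequence of matchings with meshes tending to zero (`Tower`); the matchings converge
to `g` and the ratios of maximal heights converge uniformly to `α`, while upper semicontinuity turns
the ratios of maxima into the identity `φ ∘ g = α φ` (`Tower.exists_multiplier`).
-/

open Set Topology

noncomputable section

namespace SmoothFanPaper

/-! ### Lelek functions and matched partitions -/

/-- A Lelek function on a space `T`: an upper semicontinuous function into `[0,1]`, positive on a
dense set, such that every vertical segment `{c} × [0, φ c]` lies in the closure of the graph. -/
structure IsLelek {T : Type*} [TopologicalSpace T] (φ : T → ℝ) : Prop where
  nonneg : ∀ x, 0 ≤ φ x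
  le_one : ∀ x, φ x ≤ 1
  usc : ∀ t, IsOpen {x | φ x < t}
  pos_dense : ∀ U : Set T, IsOpen U → U.Nonempty → ∃ x ∈ U, 0 < φ x
  lelek : ∀ c t, 0 < t → t < φ c → ∀ U : Set T, IsOpen U → c ∈ U → ∀ ε > 0,
    ∃ x ∈ U, |φ x - t| < ε

/-- The supremum of `φ` over `A`. For a Lelek function on a compact space and a nonempty
closed `A` it is a maximum. -/
def sup {T : Type*} (φ : T → ℝ) (A : Set T) : ℝ := sSup (φ '' A)

/-- The logarithmic height ratio of a pair of sets. -/
def rat {T : Type*} (φ : T → ℝ) (p : Set T × Set T) : ℝ :=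
  Real.log (sup φ p.2) - Real.log (sup φ p.1)

/-- A pair of nonempty clopen sets. -/
structure Good {T : Type*} [TopologicalSpace T] (p : Set T × Set T) : Prop where
  clopen1 : IsClopen p.1
  clopen2 : IsClopen p.2
  ne1 : p.1.Nonempty
  ne2 : p.2.Nonempty

/-- The first components of the pairs in `S` are pairwise disjoint and cover `A`, the second ones are
pairwise disjoint and cover `B`. The components are not required to lie in `A` and `B`; where this
matters it is a separate condition. -/
structure Matching {T : Type*} (A B : Set T) (S : Set (Set T × Set T)) : Prop where
  cov1 : ∀ x ∈ A, ∃ q ∈ S, x ∈ q.1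
  uniq1 : ∀ q ∈ S, ∀ q' ∈ S, ∀ x, x ∈ q.1 → x ∈ q'.1 → q = q'
  cov2 : ∀ x ∈ B, ∃ q ∈ S, x ∈ q.2
  uniq2 : ∀ q ∈ S, ∀ q' ∈ S, ∀ x, x ∈ q.2 → x ∈ q'.2 → q = q'

/-- `S` splits the pair `p` into good pairs, matching a partition of `p.1` with one of `p.2`,
and changing the logarithmic height ratio by at most `ε`. -/
structure Splits {T : Type*} [TopologicalSpace T] (φ : T → ℝ) (p : Set T × Set T)
    (S : Set (Set T × Set T)) (ε : ℝ) : Prop where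
  sub : ∀ q ∈ S, q.1 ⊆ p.1 ∧ q.2 ⊆ p.2
  good : ∀ q ∈ S, Good q
  rat_le : ∀ q ∈ S, |rat φ q - rat φ p| ≤ ε
  matching : Matching p.1 p.2 S

/-- All distances in `A` are at most `δ`. -/
def Small {T : Type*} [MetricSpace T] (A : Set T) (δ : ℝ) : Prop :=
  ∀ x ∈ A, ∀ y ∈ A, dist x y ≤ δ

section

variable {T : Type*} {φ : T → ℝ}

theorem Matching.swap {A B : Set T} {S : Set (Set T × Set T)} (h : Matching A B S) :
    Matching B A (Prod.swap ⁻¹' S) where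
  cov1 x hx := by
    obtain ⟨q, hq, hxq⟩ := h.cov2 x hx
    exact ⟨q.swap, by simpa using hq, hxq⟩
  cov2 x hx := by
    obtain ⟨q, hq, hxq⟩ := h.cov1 x hx
    exact ⟨q.swap, by simpa using hq, hxq⟩
  uniq1 q hq q' hq' x hx hx' := Prod.swap_injective (h.uniq2 _ hq _ hq' x hx hx')
  uniq2 q hq q' hq' x hx hx' := Prod.swap_injective (h.uniq1 _ hq _ hq' x hx hx')

theorem rat_swap (p : Set T × Set T) : rat φ p.swap = -rat φ p := by
  simp [rat]

/-- Refining every pair of a matching again gives a matching. -/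
theorem Matching.comp {A B : Set T} {S : Set (Set T × Set T)}
    {S' : Set T × Set T → Set (Set T × Set T)} (h : Matching A B S)
    (hsub : ∀ q ∈ S, ∀ r ∈ S' q, r.1 ⊆ q.1 ∧ r.2 ⊆ q.2)
    (h' : ∀ q ∈ S, Matching q.1 q.2 (S' q)) :
    Matching A B {r | ∃ q ∈ S, r ∈ S' q} where
  cov1 x hx := by
    obtain ⟨q, hq, hxq⟩ := h.cov1 x hx
    obtain ⟨r, hr, hxr⟩ := (h' q hq).cov1 x hxq
    exact ⟨r, ⟨q, hq, hr⟩, hxr⟩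
  cov2 x hx := by
    obtain ⟨q, hq, hxq⟩ := h.cov2 x hx
    obtain ⟨r, hr, hxr⟩ := (h' q hq).cov2 x hxq
    exact ⟨r, ⟨q, hq, hr⟩, hxr⟩
  uniq1 := by
    rintro r ⟨q, hq, hr⟩ r' ⟨q', hq', hr'⟩ x hx hx'
    obtain rfl := h.uniq1 q hq q' hq' x ((hsub q hq r hr).1 hx) ((hsub q' hq' r' hr').1 hx')
    exact (h' q hq).uniq1 r hr r' hr' x hx hx'
  uniq2 := by
    rintro r ⟨q, hq, hr⟩ r' ⟨q', hq', hr'⟩ x hx hx'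
    obtain rfl := h.uniq2 q hq q' hq' x ((hsub q hq r hr).2 hx) ((hsub q' hq' r' hr').2 hx')
    exact (h' q hq).uniq2 r hr r' hr' x hx hx'

theorem sup_le {A : Set T} (hA : A.Nonempty) {t : ℝ} (h : ∀ x ∈ A, φ x ≤ t) : sup φ A ≤ t :=
  csSup_le (hA.image _) (by rintro _ ⟨y, hy, rfl⟩; exact h y hy)

section

variable [TopologicalSpace T]

theorem Good.swap {p : Set T × Set T} (h : Good p) : Good p.swap :=
  ⟨h.clopen2, h.clopen1, h.ne2, h.ne1⟩

theorem Splits.swap {p : Set T × Set T} {S : Set (Set T × Set T)} {ε : ℝ}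
    (h : Splits φ p S ε) : Splits φ p.swap (Prod.swap ⁻¹' S) ε where
  sub q hq := (h.sub _ hq).symm
  good q hq := (h.good _ hq).swap
  rat_le q hq := by
    have := h.rat_le _ hq
    rw [rat_swap] at this
    rw [rat_swap, abs_sub_comm]
    convert this using 2
    ring
  matching := h.matching.swap

theorem Splits.comp {p : Set T × Set T} {S : Set (Set T × Set T)}
    {S' : Set T × Set T → Set (Set T × Set T)} {ε ε' : ℝ}
    (h : Splits φ p S ε) (h' : ∀ q ∈ S, Splits φ q (S' q) ε') :
    Splits φ p {r | ∃ q ∈ S, r ∈ S' q} (ε + ε') where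
  sub := by
    rintro r ⟨q, hq, hr⟩
    exact ⟨((h' q hq).sub r hr).1.trans (h.sub q hq).1,
      ((h' q hq).sub r hr).2.trans (h.sub q hq).2⟩
  good := by
    rintro r ⟨q, hq, hr⟩
    exact (h' q hq).good r hr
  rat_le := by
    rintro r ⟨q, hq, hr⟩
    have h1 := h.rat_le q hq
    have h2 := (h' q hq).rat_le r hr
    rw [abs_le] at *
    constructor <;> linarith [h1.1, h1.2, h2.1, h2.2]
  matching := h.matching.comp (fun q hq => (h' q hq).sub) (fun q hq => (h' q hq).matching)

theorem IsLelek.le_sup (h : IsLelek φ) {A : Set T} {x : T} (hx : x ∈ A) : φ x ≤ sup φ A :=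
  le_csSup ⟨1, by rintro _ ⟨y, _, rfl⟩; exact h.le_one y⟩ ⟨x, hx, rfl⟩

theorem IsLelek.exists_max [CompactSpace T] (h : IsLelek φ) {A : Set T} (hA : IsClosed A)
    (hne : A.Nonempty) : ∃ x ∈ A, sup φ A = φ x := by
  have husc : UpperSemicontinuousOn φ A := fun x _ t ht =>
    mem_nhdsWithin_of_mem_nhds ((h.usc t).mem_nhds ht)
  obtain ⟨x, hx, hmax⟩ := husc.exists_isMaxOn hne hA.isCompact
  exact ⟨x, hx, le_antisymm (sup_le hne fun y hy => hmax hy) (h.le_sup hx)⟩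

theorem IsLelek.sup_pos (h : IsLelek φ) {A : Set T} (hA : IsOpen A)
    (hne : A.Nonempty) : 0 < sup φ A := by
  obtain ⟨x, hx, hpos⟩ := h.pos_dense A hA hne
  exact hpos.trans_le (h.le_sup hx)

end

section

variable [MetricSpace T] [CompactSpace T] [TotallyDisconnectedSpace T]

/-- Below any point `y₀` there are clopen sets, arbitrarily close to `y₀` but missing it, whose
height approximates a prescribed value `m ≤ φ y₀`. -/
theorem IsLelek.exists_clopen (h : IsLelek φ) {V : Set T} (hV : IsClopen V) {y₀ : T}
    (hy₀ : y₀ ∈ V) {m : ℝ} (hm : 0 < m) (hmy : m ≤ φ y₀) {ε : ℝ} (hε : 0 < ε) :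
    ∃ W : Set T, IsClopen W ∧ W.Nonempty ∧ W ⊆ V ∧ y₀ ∉ W ∧
      |Real.log (sup φ W) - Real.log m| ≤ ε := by
  have he : Real.exp (-ε) < 1 := by simpa using hε
  have hep : 0 < Real.exp (-ε) := Real.exp_pos _
  have h1 : m * Real.exp (-ε) < m := by nlinarith
  have h0 : 0 < m * Real.exp (-ε) := by positivity
  -- aim at the midpoint of `m e^{-ε}` and `m`
  obtain ⟨z, hzV, hz⟩ := h.lelek y₀ ((m * Real.exp (-ε) + m) / 2) (by linarith) (by linarith)
    V hV.isOpen hy₀ ((m - m * Real.exp (-ε)) / 2) (by linarith)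
  rw [abs_lt] at hz
  have hzm : φ z < m := by linarith [hz.2]
  have hzm' : m * Real.exp (-ε) < φ z := by linarith [hz.1]
  have hzy : z ≠ y₀ := by rintro rfl; linarith
  obtain ⟨W, hW, hzW, hWs⟩ := compact_exists_isClopen_in_isOpen
    (U := V ∩ {y₀}ᶜ ∩ {x | φ x < m})
    ((hV.isOpen.inter isOpen_compl_singleton).inter (h.usc m)) (x := z) ⟨⟨hzV, hzy⟩, hzm⟩
  refine ⟨W, hW, ⟨z, hzW⟩, fun x hx => (hWs hx).1.1, fun hy => (hWs hy).1.2 rfl, ?_⟩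
  have hlo : m * Real.exp (-ε) ≤ sup φ W := hzm'.le.trans (h.le_sup hzW)
  have hhi : sup φ W ≤ m := sup_le ⟨z, hzW⟩ fun x hx => (hWs hx).2.le
  have hpos : 0 < sup φ W := h0.trans_le hlo
  have l1 := Real.log_le_log h0 hlo
  rw [Real.log_mul hm.ne' hep.ne', Real.log_exp] at l1
  have l2 := Real.log_le_log hpos hhi
  rw [abs_le]
  constructor <;> linarith

theorem IsLelek.exists_family (h : IsLelek φ) {V : Set T} (hV : IsClopen V) {y₀ : T}
    (hy₀ : y₀ ∈ V) {ε : ℝ} (hε : 0 < ε) {ι : Type*} [DecidableEq ι] (s : Finset ι) (m : ι → ℝ)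
    (hm : ∀ i ∈ s, 0 < m i ∧ m i ≤ φ y₀) :
    ∃ W : ι → Set T, (∀ i ∈ s, IsClopen (W i) ∧ (W i).Nonempty ∧ W i ⊆ V ∧ y₀ ∉ W i ∧
      |Real.log (sup φ (W i)) - Real.log (m i)| ≤ ε) ∧
      ∀ i ∈ s, ∀ j ∈ s, ∀ x, x ∈ W i → x ∈ W j → i = j := by
  induction s using Finset.induction_on with
  | empty => exact ⟨fun _ => ∅, by simp, by simp⟩
  | insert a s ha ih =>
    obtain ⟨W, hW, hd⟩ := ih fun i hi => hm i (Finset.mem_insert_of_mem hi)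
    have hU : IsClopen (⋃ i ∈ s, W i) := s.finite_toSet.isClopen_biUnion fun i hi => (hW i hi).1
    obtain ⟨A, hA, hne, hAV, hyA, hAm⟩ := h.exists_clopen (V := V \ ⋃ i ∈ s, W i)
      (hV.diff hU) (y₀ := y₀)
      ⟨hy₀, by simp only [mem_iUnion, not_exists]; exact fun i hi => (hW i hi).2.2.2.1⟩
      (hm a (Finset.mem_insert_self _ _)).1 (hm a (Finset.mem_insert_self _ _)).2 hε
    have hdis : ∀ x ∈ A, ∀ i ∈ s, x ∉ W i := fun x hx i hi hxi =>
      (hAV hx).2 (mem_biUnion hi hxi)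
    have hne' : ∀ i ∈ s, i ≠ a := by rintro i hi rfl; exact ha hi
    refine ⟨fun i => if i = a then A else W i, ?_, ?_⟩
    · intro i hi
      rcases Finset.mem_insert.1 hi with rfl | hi
      · simpa using ⟨hA, hne, hAV.trans sdiff_subset, hyA, hAm⟩
      · simpa [hne' i hi] using hW i hi
    · intro i hi j hj x hx hx'
      rcases Finset.mem_insert.1 hi with rfl | hi' <;>
        rcases Finset.mem_insert.1 hj with rfl | hj'
      · rfl
      · simp only [if_true, hne' j hj', if_false] at hx hx'
        exact absurd hx' (hdis x hx j hj')
      · simp only [if_true, hne' i hi', if_false] at hx hx'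
        exact absurd hx (hdis x hx' i hi')
      · simp only [hne' i hi', hne' j hj', if_false] at hx hx'
        exact hd i hi' j hj' x hx hx'

/-- A finite clopen partition of mesh at most `δ`, given as the fibres of a labelling. -/
theorem exists_label (T : Type*) [MetricSpace T] [CompactSpace T] [TotallyDisconnectedSpace T]
    {δ : ℝ} (hδ : 0 < δ) :
    ∃ (ι : Type) (_ : Fintype ι) (_ : DecidableEq ι) (f : T → ι),
      (∀ i, IsClopen (f ⁻¹' {i})) ∧ ∀ i, Small (f ⁻¹' {i}) δ := by
  classical
  have key : ∀ x : T, ∃ W : Set T, IsClopen W ∧ x ∈ W ∧ W ⊆ Metric.ball x (δ / 2) := fun x =>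
    compact_exists_isClopen_in_isOpen Metric.isOpen_ball (Metric.mem_ball_self (by positivity))
  choose W hW hxW hWs using key
  obtain ⟨s, hs⟩ := isCompact_univ.elim_finite_subcover W (fun x => (hW x).isOpen)
    (fun x _ => mem_iUnion.2 ⟨x, hxW x⟩)
  let e := s.equivFin
  -- a point is labelled by the set of indices of the members of the cover containing it
  let f : T → (Fin s.card → Bool) := fun x j => decide (x ∈ W (e.symm j))
  have hf : ∀ i, f ⁻¹' {i} = ⋂ j, {x | decide (x ∈ W (e.symm j)) = i j} := by
    intro i; ext x
    simp [f, funext_iff]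
  refine ⟨Fin s.card → Bool, inferInstance, inferInstance, f, fun i => ?_, fun i x hx y hy => ?_⟩
  · rw [hf]
    refine isClopen_iInter_of_finite fun j => ?_
    cases hij : i j
    · simpa [compl_def] using (hW (e.symm j)).compl
    · simpa using hW (e.symm j)
  · obtain ⟨c, hcs, hxc⟩ := mem_iUnion₂.1 (hs (mem_univ x))
    have hfx : f x = f y := by rw [hx, hy]
    have := congr_fun hfx (e ⟨c, hcs⟩)
    simp only [f, Equiv.symm_apply_apply, decide_eq_decide] at this
    have h1 := hWs c hxc
    have h2 := hWs c (this.1 hxc)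
    rw [Metric.mem_ball] at h1 h2
    have := dist_triangle_right x y c
    linarith

/-- The one-sided splitting step. The piece of `p.1` containing a maximum point `x₀` is matched
with what remains of `p.2` after clopen sets of suitable heights, missing a maximum point `y₀` of
`p.2`, have been removed for the other pieces. -/
theorem IsLelek.exists_splits_left (h : IsLelek φ) {p : Set T × Set T} (hp : Good p) {δ : ℝ}
    (hδ : 0 < δ) : ∃ S, Splits φ p S δ ∧ ∀ q ∈ S, Small q.1 δ := by
  classical
  obtain ⟨ι, _, _, f, hf, hfs⟩ := exists_label T hδ
  obtain ⟨x₀, hx₀, hsx⟩ := h.exists_max hp.clopen1.isClosed hp.ne1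
  obtain ⟨y₀, hy₀, hsy⟩ := h.exists_max hp.clopen2.isClosed hp.ne2
  have hxpos : 0 < φ x₀ := hsx ▸ h.sup_pos hp.clopen1.isOpen hp.ne1
  have hypos : 0 < φ y₀ := hsy ▸ h.sup_pos hp.clopen2.isOpen hp.ne2
  let P : ι → Set T := fun i => p.1 ∩ f ⁻¹' {i}
  have hP : ∀ i, IsClopen (P i) := fun i => hp.clopen1.inter (hf i)
  let s : Finset ι := Finset.univ.filter fun i => (P i).Nonempty ∧ i ≠ f x₀
  have hs : ∀ i, i ∈ s ↔ (P i).Nonempty ∧ i ≠ f x₀ := fun i => by simp [s]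
  let m : ι → ℝ := fun i => φ y₀ / φ x₀ * sup φ (P i)
  have hPpos : ∀ i, (P i).Nonempty → 0 < sup φ (P i) := fun i hi => h.sup_pos (hP i).isOpen hi
  have hm : ∀ i ∈ s, 0 < m i ∧ m i ≤ φ y₀ := by
    intro i hi
    have hi' := ((hs i).1 hi).1
    refine ⟨mul_pos (div_pos hypos hxpos) (hPpos i hi'), ?_⟩
    have : sup φ (P i) ≤ φ x₀ := sup_le hi' fun x hx => hsx ▸ h.le_sup hx.1
    calc m i ≤ φ y₀ / φ x₀ * φ x₀ := by simp only [m]; gcongr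
      _ = φ y₀ := by field_simp
  obtain ⟨W, hW, hd⟩ := h.exists_family hp.clopen2 hy₀ hδ s m hm
  let R : Set T := p.2 \ ⋃ i ∈ s, W i
  have hR : IsClopen R := hp.clopen2.diff (s.finite_toSet.isClopen_biUnion fun i hi => (hW i hi).1)
  have hyR : y₀ ∈ R :=
    ⟨hy₀, by simp only [mem_iUnion, not_exists]; exact fun i hi => (hW i hi).2.2.2.1⟩
  have hRd : ∀ x ∈ R, ∀ i ∈ s, x ∉ W i := fun x hx i hi hxi => hx.2 (mem_biUnion hi hxi)
  have hfx : f x₀ ∉ s := fun hc => ((hs _).1 hc).2 rfl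
  have hne : ∀ i ∈ s, i ≠ f x₀ := fun i hi => ((hs _).1 hi).2
  let S : Set (Set T × Set T) := {q | q = (P (f x₀), R) ∨ ∃ i ∈ s, q = (P i, W i)}
  have hPu : ∀ i j x, x ∈ P i → x ∈ P j → i = j := fun i j x hx hx' => by
    rw [← show f x = i from hx.2, ← show f x = j from hx'.2]
  refine ⟨S, ⟨?_, ?_, ?_, ?_, ?_, ?_, ?_⟩, ?_⟩
  · rintro q (rfl | ⟨i, hi, rfl⟩)
    · exact ⟨inter_subset_left, sdiff_subset⟩
    · exact ⟨inter_subset_left, (hW i hi).2.2.1⟩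
  · rintro q (rfl | ⟨i, hi, rfl⟩)
    · exact ⟨hP _, hR, ⟨x₀, hx₀, rfl⟩, ⟨y₀, hyR⟩⟩
    · exact ⟨hP _, (hW i hi).1, ((hs i).1 hi).1, (hW i hi).2.1⟩
  · rintro q (rfl | ⟨i, hi, rfl⟩)
    · have e1 : sup φ (P (f x₀)) = φ x₀ := le_antisymm
        (sup_le (A := P (f x₀)) ⟨x₀, hx₀, rfl⟩ fun x hx => hsx ▸ h.le_sup hx.1) (h.le_sup ⟨hx₀, rfl⟩)
      have e2 : sup φ R = φ y₀ := le_antisymm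
        (sup_le ⟨y₀, hyR⟩ fun x hx => hsy ▸ h.le_sup hx.1) (h.le_sup hyR)
      simp only [rat, e1, e2, hsx, hsy]
      simpa using hδ.le
    · have := (hW i hi).2.2.2.2
      have hpos := hPpos i ((hs i).1 hi).1
      simp only [m] at this
      rw [Real.log_mul (div_pos hypos hxpos).ne' hpos.ne',
        Real.log_div hypos.ne' hxpos.ne'] at this
      simp only [rat, hsx, hsy]
      convert this using 2
      ring
  · intro x hx
    by_cases hxf : f x = f x₀
    · exact ⟨_, Or.inl rfl, hx, hxf⟩
    · exact ⟨_, Or.inr ⟨f x, (hs _).2 ⟨⟨x, hx, rfl⟩, hxf⟩, rfl⟩, hx, rfl⟩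
  · rintro q (rfl | ⟨i, hi, rfl⟩) q' (rfl | ⟨j, hj, rfl⟩) x hx hx'
    · rfl
    · exact absurd (hPu _ _ x hx' hx) (hne j hj)
    · exact absurd (hPu _ _ x hx hx') (hne i hi)
    · rw [hPu _ _ x hx hx']
  · intro y hy
    by_cases hyR' : y ∈ R
    · exact ⟨_, Or.inl rfl, hyR'⟩
    · have : y ∈ ⋃ i ∈ s, W i := by
        by_contra hc
        exact hyR' ⟨hy, hc⟩
      obtain ⟨i, hi, hyi⟩ := mem_iUnion₂.1 this
      exact ⟨_, Or.inr ⟨i, hi, rfl⟩, hyi⟩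
  · rintro q (rfl | ⟨i, hi, rfl⟩) q' (rfl | ⟨j, hj, rfl⟩) x hx hx'
    · rfl
    · exact absurd hx' (hRd x hx j hj)
    · exact absurd hx (hRd x hx' i hi)
    · rw [hd i hi j hj x hx hx']
  · rintro q (rfl | ⟨i, hi, rfl⟩)
    · exact fun x hx y hy => hfs _ x hx.2 y hy.2
    · exact fun x hx y hy => hfs _ x hx.2 y hy.2

/-- The two-sided splitting step: split on the left, then split each resulting pair on the
right. -/
theorem IsLelek.exists_splits (h : IsLelek φ) {p : Set T × Set T} (hp : Good p) {δ : ℝ}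
    (hδ : 0 < δ) : ∃ S, Splits φ p S δ ∧ ∀ q ∈ S, Small q.1 δ ∧ Small q.2 δ := by
  obtain ⟨S, hS, hsm⟩ := h.exists_splits_left hp (half_pos hδ)
  have key : ∀ q : Set T × Set T, ∃ S', q ∈ S → Splits φ q S' (δ / 2) ∧
      ∀ r ∈ S', Small r.2 (δ / 2) := by
    intro q
    by_cases hq : q ∈ S
    · obtain ⟨S', hS', hsm'⟩ := h.exists_splits_left (hS.good q hq).swap (half_pos hδ)
      exact ⟨_, fun _ => ⟨hS'.swap, fun r hr => hsm' _ hr⟩⟩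
    · exact ⟨∅, fun hc => absurd hc hq⟩
  choose S' hS' using key
  refine ⟨{r | ∃ q ∈ S, r ∈ S' q}, by simpa using hS.comp (fun q hq => (hS' q hq).1), ?_⟩
  rintro r ⟨q, hq, hr⟩
  refine ⟨fun x hx y hy => ?_, fun x hx y hy => ?_⟩
  · have hsub := (((hS' q hq).1).sub r hr).1
    exact (hsm q hq x (hsub hx) y (hsub hy)).trans (by linarith)
  · exact ((hS' q hq).2 r hr x hx y hy).trans (by linarith)

end

/-! ### The limit of a tower of matchings -/

/-- A sequence of matchings by good pairs, each refining the previous one, with meshes and changes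
of the logarithmic height ratio controlled by a geometric series. -/
structure Tower {T : Type*} [MetricSpace T] (φ : T → ℝ) (R : ℕ → Set (Set T × Set T)) : Prop where
  matching : ∀ n, Matching univ univ (R n)
  good : ∀ n, ∀ q ∈ R n, Good q
  parent : ∀ n, ∀ q ∈ R (n + 1), ∃ p ∈ R n, q.1 ⊆ p.1 ∧ q.2 ⊆ p.2 ∧
    |rat φ q - rat φ p| ≤ 1 / 2 / 2 ^ n
  small : ∀ n, ∀ q ∈ R (n + 1), Small q.1 (1 / 2 / 2 ^ n) ∧ Small q.2 (1 / 2 / 2 ^ n)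

section

variable [MetricSpace T]

theorem tendsto_mesh : Filter.Tendsto (fun n : ℕ => (1 : ℝ) / 2 / 2 ^ n) Filter.atTop (𝓝 0) := by
  have := (tendsto_pow_atTop_nhds_zero_of_lt_one (r := (1 / 2 : ℝ)) (by norm_num)
    (by norm_num)).const_mul (1 / 2 : ℝ)
  rw [mul_zero] at this
  refine this.congr fun n => ?_
  rw [one_div_pow]
  ring

theorem Tower.swap {R : ℕ → Set (Set T × Set T)} (h : Tower φ R) :
    Tower φ (fun n => Prod.swap ⁻¹' R n) where
  matching n := (h.matching n).swap
  good n q hq := (h.good n _ hq).swap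
  parent n q hq := by
    obtain ⟨p, hp, h1, h2, h3⟩ := h.parent n _ hq
    refine ⟨p.swap, by simpa using hp, h2, h1, ?_⟩
    rw [rat_swap, abs_sub_comm] at h3
    rw [rat_swap]
    convert h3 using 2
    ring
  small n q hq := (h.small n _ hq).symm

/-- In a tower, the pairs whose first components contain `x` form a decreasing sequence. -/
theorem Tower.exists_branch {R : ℕ → Set (Set T × Set T)} (h : Tower φ R) (x : T) :
    ∃ p : ℕ → Set T × Set T, (∀ n, p n ∈ R n ∧ x ∈ (p n).1) ∧
      (∀ n, (p (n + 1)).1 ⊆ (p n).1 ∧ (p (n + 1)).2 ⊆ (p n).2) ∧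
      ∀ n, dist (rat φ (p n)) (rat φ (p (n + 1))) ≤ 1 / 2 / 2 ^ n := by
  choose p hp using fun n => (h.matching n).cov1 x (mem_univ x)
  have key : ∀ n, ((p (n + 1)).1 ⊆ (p n).1 ∧ (p (n + 1)).2 ⊆ (p n).2) ∧
      dist (rat φ (p n)) (rat φ (p (n + 1))) ≤ 1 / 2 / 2 ^ n := by
    intro n
    obtain ⟨q, hq, h1, h2, h3⟩ := h.parent n _ (hp (n + 1)).1
    obtain rfl := (h.matching n).uniq1 q hq _ (hp n).1 x (h1 (hp (n + 1)).2) (hp n).2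
    exact ⟨⟨h1, h2⟩, by rwa [dist_comm, Real.dist_eq]⟩
  exact ⟨p, hp, fun n => (key n).1, fun n => (key n).2⟩

/-- The map determined by a tower. -/
theorem Tower.exists_map [CompactSpace T] {R : ℕ → Set (Set T × Set T)} (h : Tower φ R) :
    ∃ g : T → T, ∀ n, ∀ q ∈ R n, ∀ x ∈ q.1, g x ∈ q.2 := by
  have key : ∀ x : T, ∃ y, ∀ n, ∀ q ∈ R n, x ∈ q.1 → y ∈ q.2 := by
    intro x
    obtain ⟨p, hp, hsub, -⟩ := h.exists_branch x
    obtain ⟨y, hy⟩ := IsCompact.nonempty_iInter_of_sequence_nonempty_isCompact_isClosed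
      (fun n => (p n).2) (fun n => (hsub n).2) (fun n => (h.good n _ (hp n).1).ne2)
      (h.good 0 _ (hp 0).1).clopen2.isClosed.isCompact
      (fun n => (h.good n _ (hp n).1).clopen2.isClosed)
    refine ⟨y, fun n q hq hxq => ?_⟩
    rw [(h.matching n).uniq1 q hq _ (hp n).1 x hxq (hp n).2]
    exact mem_iInter.1 hy n
  choose g hg using key
  exact ⟨g, fun n q hq x hx => hg x n q hq hx⟩

theorem Tower.continuous {R : ℕ → Set (Set T × Set T)} (h : Tower φ R) {g : T → T}
    (hg : ∀ n, ∀ q ∈ R n, ∀ x ∈ q.1, g x ∈ q.2) : Continuous g := by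
  rw [continuous_iff_continuousAt]
  intro x
  rw [Metric.continuousAt_iff']
  intro ε hε
  obtain ⟨n, hn⟩ := (tendsto_mesh.eventually_lt_const hε).exists
  obtain ⟨q, hq, hxq⟩ := (h.matching (n + 1)).cov1 x (mem_univ x)
  filter_upwards [(h.good _ q hq).clopen1.isOpen.mem_nhds hxq] with y hy
  exact ((h.small n q hq).2 _ (hg _ q hq y hy) _ (hg _ q hq x hxq)).trans_lt hn

/-- Two points that are never separated by the left components of a tower are equal. -/
theorem Tower.eq_of_forall {R : ℕ → Set (Set T × Set T)} (h : Tower φ R) {x y : T}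
    (hxy : ∀ n, ∃ q ∈ R n, x ∈ q.1 ∧ y ∈ q.1) : x = y := by
  refine eq_of_dist_eq_zero (le_antisymm ?_ dist_nonneg)
  refine ge_of_tendsto' tendsto_mesh fun n => ?_
  obtain ⟨q, hq, hx, hy⟩ := hxy (n + 1)
  exact (h.small n q hq).1 x hx y hy

theorem Tower.leftInverse {R : ℕ → Set (Set T × Set T)} (h : Tower φ R) {g g' : T → T}
    (hg : ∀ n, ∀ q ∈ R n, ∀ x ∈ q.1, g x ∈ q.2) (hg' : ∀ n, ∀ q ∈ R n, ∀ x ∈ q.2, g' x ∈ q.1) :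
    Function.LeftInverse g' g := fun x => h.eq_of_forall fun n => by
  obtain ⟨q, hq, hx⟩ := (h.matching n).cov1 x (mem_univ x)
  exact ⟨q, hq, hg' n q hq _ (hg n q hq x hx), hx⟩

/-- By upper semicontinuity, the suprema over sets shrinking to `x` converge to `φ x`. -/
theorem IsLelek.tendsto_sup (h : IsLelek φ) {x : T} {A : ℕ → Set T} (hx : ∀ n, x ∈ A n)
    (hA : ∀ n, Small (A (n + 1)) (1 / 2 / 2 ^ n)) :
    Filter.Tendsto (fun n => sup φ (A (n + 1))) Filter.atTop (𝓝 (φ x)) := by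
  refine tendsto_order.2 ⟨fun a ha => Filter.Eventually.of_forall fun n =>
    ha.trans_le (h.le_sup (hx _)), fun a ha => ?_⟩
  obtain ⟨b, hb, hba⟩ := exists_between ha
  obtain ⟨ε, hε, hball⟩ := Metric.isOpen_iff.1 (h.usc b) x hb
  filter_upwards [tendsto_mesh.eventually_lt_const hε] with n hn
  exact (sup_le ⟨x, hx _⟩ fun y hy =>
    (hball (Metric.mem_ball.2 ((hA n y hy x (hx _)).trans_lt hn))).le).trans_lt hba

/-- The limit of the height ratios of a tower is a continuous multiplier relating `φ ∘ g`
to `φ`. -/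
theorem Tower.exists_multiplier (hφ : IsLelek φ) {R : ℕ → Set (Set T × Set T)} (h : Tower φ R)
    {g : T → T} (hg : ∀ n, ∀ q ∈ R n, ∀ x ∈ q.1, g x ∈ q.2) :
    ∃ α : T → ℝ, Continuous α ∧ (∀ x, 0 < α x) ∧ ∀ x, φ (g x) = α x * φ x := by
  choose p hp hsub hrat using h.exists_branch
  choose β hβ using fun x => cauchySeq_tendsto_of_complete (cauchySeq_of_le_geometric_two (hrat x))
  have hdist : ∀ x n, dist (rat φ (p x n)) (β x) ≤ 1 / 2 ^ n := fun x n =>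
    dist_le_of_le_geometric_two_of_tendsto (hrat x) (hβ x) n
  refine ⟨fun x => Real.exp (β x), Real.continuous_exp.comp ?_, fun x => Real.exp_pos _,
    fun x => ?_⟩
  · rw [continuous_iff_continuousAt]
    intro x
    rw [Metric.continuousAt_iff']
    intro ε hε
    obtain ⟨n, hn⟩ := (tendsto_mesh.eventually_lt_const (show 0 < ε / 4 by positivity)).exists
    filter_upwards [(h.good _ _ (hp x n).1).clopen1.isOpen.mem_nhds (hp x n).2] with y hy
    have e : p y n = p x n := (h.matching n).uniq1 _ (hp y n).1 _ (hp x n).1 y (hp y n).2 hy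
    have h1 := hdist y n
    have h2 := hdist x n
    rw [e] at h1
    have := dist_triangle_left (β y) (β x) (rat φ (p x n))
    have e2 : (1 : ℝ) / 2 / 2 ^ n = 1 / 2 ^ n / 2 := by ring
    linarith
  · have t1 := hφ.tendsto_sup (fun n => (hp x n).2) (fun n => (h.small n _ (hp x (n + 1)).1).1)
    have t2 := hφ.tendsto_sup (fun n => hg n _ (hp x n).1 x (hp x n).2)
      (fun n => (h.small n _ (hp x (n + 1)).1).2)
    have t3 := ((Real.continuous_exp.tendsto _).comp
      ((Filter.tendsto_add_atTop_iff_nat 1).2 (hβ x))).mul t1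
    refine tendsto_nhds_unique t2 (t3.congr fun n => ?_)
    have hgood := h.good _ _ (hp x (n + 1)).1
    have p1 := hφ.sup_pos hgood.clopen1.isOpen hgood.ne1
    have p2 := hφ.sup_pos hgood.clopen2.isOpen hgood.ne2
    simp only [Function.comp, rat]
    rw [Real.exp_sub, Real.exp_log p1, Real.exp_log p2]
    field_simp

variable [CompactSpace T] [TotallyDisconnectedSpace T]

/-- Every matching of the whole space with itself by good pairs is the bottom of a tower. -/
theorem IsLelek.exists_tower (hφ : IsLelek φ) {R₀ : Set (Set T × Set T)}
    (hR : Matching univ univ R₀) (hgood : ∀ q ∈ R₀, Good q) :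
    ∃ R, Tower φ R ∧ R 0 = R₀ := by
  have key : ∀ (n : ℕ) (q : Set T × Set T), ∃ S, Good q → Splits φ q S (1 / 2 / 2 ^ n) ∧
      ∀ r ∈ S, Small r.1 (1 / 2 / 2 ^ n) ∧ Small r.2 (1 / 2 / 2 ^ n) := by
    intro n q
    by_cases hq : Good q
    · obtain ⟨S, hS⟩ := hφ.exists_splits hq (show (0 : ℝ) < 1 / 2 / 2 ^ n by positivity)
      exact ⟨S, fun _ => hS⟩
    · exact ⟨∅, fun hc => absurd hc hq⟩
  choose S hS using key
  let R : ℕ → Set (Set T × Set T) := fun n =>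
    Nat.rec R₀ (fun n Q => {r | ∃ q ∈ Q, r ∈ S n q}) n
  have hsucc : ∀ n, R (n + 1) = {r | ∃ q ∈ R n, r ∈ S n q} := fun n => rfl
  have hgoodR : ∀ n, ∀ q ∈ R n, Good q := by
    intro n
    induction n with
    | zero => exact hgood
    | succ n ih =>
      rintro r ⟨q, hq, hr⟩
      exact (hS n q (ih q hq)).1.good r hr
  refine ⟨R, ⟨fun n => ?_, hgoodR, ?_, ?_⟩, rfl⟩
  · induction n with
    | zero => exact hR
    | succ n ih =>
      rw [hsucc]
      exact ih.comp (fun q hq => (hS n q (hgoodR n q hq)).1.sub)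
        (fun q hq => (hS n q (hgoodR n q hq)).1.matching)
  · rintro n r ⟨q, hq, hr⟩
    have hs := (hS n q (hgoodR n q hq)).1
    exact ⟨q, hq, (hs.sub r hr).1, (hs.sub r hr).2, hs.rat_le r hr⟩
  · rintro n r ⟨q, hq, hr⟩
    exact (hS n q (hgoodR n q hq)).2 r hr

/-- The base space of a Lelek function has a nontrivial self-homeomorphism that changes the
function only by a continuous positive factor: interchange a clopen set with its complement. -/
theorem IsLelek.exists_map (hφ : IsLelek φ) [Nonempty T] :
    ∃ (g : T → T) (α : T → ℝ), Continuous g ∧ Function.Bijective g ∧ Continuous α ∧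
      (∀ x, 0 < α x) ∧ (∀ x, φ (g x) = α x * φ x) ∧ ∀ x, g x ≠ x := by
  obtain ⟨c, -, hc⟩ := hφ.pos_dense univ isOpen_univ univ_nonempty
  obtain ⟨d, -, hd⟩ := hφ.lelek c (φ c / 2) (by linarith) (by linarith) univ isOpen_univ
    (mem_univ _) (φ c / 2) (by linarith)
  have hdc : d ≠ c := by
    rintro rfl
    rw [abs_lt] at hd
    linarith [hd.2]
  obtain ⟨U, hU, hdU, hUc⟩ := compact_exists_isClopen_in_isOpen
    (isOpen_compl_singleton (x := c)) hdc
  have hcU : c ∈ Uᶜ := fun h => hUc h rfl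
  let R₀ : Set (Set T × Set T) := {q | q = (U, Uᶜ) ∨ q = (Uᶜ, U)}
  have hR₀ : Matching univ univ R₀ := by
    refine ⟨fun x _ => ?_, ?_, fun x _ => ?_, ?_⟩
    · by_cases hx : x ∈ U
      · exact ⟨_, Or.inl rfl, hx⟩
      · exact ⟨_, Or.inr rfl, hx⟩
    · rintro q (rfl | rfl) q' (rfl | rfl) x hx hx'
      exacts [rfl, absurd hx hx', absurd hx' hx, rfl]
    · by_cases hx : x ∈ U
      · exact ⟨_, Or.inr rfl, hx⟩
      · exact ⟨_, Or.inl rfl, hx⟩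
    · rintro q (rfl | rfl) q' (rfl | rfl) x hx hx'
      exacts [rfl, absurd hx' hx, absurd hx hx', rfl]
  have hgood : ∀ q ∈ R₀, Good q := by
    rintro q (rfl | rfl)
    exacts [⟨hU, hU.compl, ⟨d, hdU⟩, ⟨c, hcU⟩⟩, ⟨hU.compl, hU, ⟨c, hcU⟩, ⟨d, hdU⟩⟩]
  obtain ⟨R, hR, hR0⟩ := hφ.exists_tower hR₀ hgood
  obtain ⟨g, hg⟩ := hR.exists_map
  obtain ⟨g', hg'⟩ := hR.swap.exists_map
  have hg'' : ∀ n, ∀ q ∈ R n, ∀ x ∈ q.2, g' x ∈ q.1 := fun n q hq x hx =>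
    hg' n q.swap (by simpa using hq) x hx
  obtain ⟨α, hα, hpos, heq⟩ := hR.exists_multiplier hφ hg
  refine ⟨g, α, hR.continuous hg, ⟨(hR.leftInverse hg hg'').injective,
    Function.LeftInverse.surjective (hR.swap.leftInverse hg' fun n q hq x hx =>
      hg n q.swap hq x hx)⟩, hα, hpos, heq, fun x hx => ?_⟩
  by_cases hxU : x ∈ U
  · have := hg 0 (U, Uᶜ) (hR0 ▸ Or.inl rfl) x hxU
    rw [hx] at this
    exact this hxU
  · have := hg 0 (Uᶜ, U) (hR0 ▸ Or.inr rfl) x hxU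
    rw [hx] at this
    exact hxU this

end

end

/-! ### Coordinates on a fan -/

/-- The Cantor set is totally disconnected, hence contains no interval. -/
theorem exists_notMem_cantorSet {a b : ℝ} (hab : a < b) : ∃ p ∈ Ioo a b, p ∉ cantorSet := by
  by_contra! hc
  have : TotallyDisconnectedSpace cantorSet :=
    cantorSetHomeomorphNatToBool.symm.totallyDisconnectedSpace
  have htd : IsTotallyDisconnected cantorSet := totallyDisconnectedSpace_subtype_iff.1 this
  have hs := htd (Ioo a b) hc isPreconnected_Ioo
  obtain ⟨p, hp⟩ := exists_between hab
  obtain ⟨q, hq⟩ := exists_between hp.2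
  exact hq.1.ne (hs ⟨hp.1, hp.2⟩ ⟨hp.1.trans hq.1, hq.2⟩)

/-- The slopes of the legs of `X`, completed to a closed set. -/
def base (X : Set (ℝ × ℝ)) : Set ℝ := closure {c | ∃ t > 0, (t * c, t) ∈ X}

/-- The height of the leg of `X` with slope `c`. -/
def height (X : Set (ℝ × ℝ)) (c : ℝ) : ℝ := sSup {t | 0 ≤ t ∧ (t * c, t) ∈ X}

/-- A subcontinuum of the Cantor fan that contains the cone point and another point. -/
structure IsFan (X : Set (ℝ × ℝ)) : Prop where
  subset_fan : X ⊆ CantorFan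
  isCompact : IsCompact X
  isPreconnected : IsPreconnected X
  vertex_mem : ((0 : ℝ), (0 : ℝ)) ∈ X
  nondegenerate : ∃ x ∈ X, ∃ y ∈ X, x ≠ y

namespace IsFan

variable {X : Set (ℝ × ℝ)} (h : IsFan X)

include h

theorem bounds {c t : ℝ} (hX : (t * c, t) ∈ X) : 0 ≤ t ∧ t ≤ 1 ∧ (0 < t → c ∈ cantorSet) := by
  obtain ⟨d, hd, s, hs, he⟩ := h.subset_fan hX
  obtain ⟨h1, rfl⟩ := Prod.mk.inj he
  exact ⟨hs.1, hs.2, fun hpos => mul_left_cancel₀ hpos.ne' h1 ▸ hd⟩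

/-- Legs are full segments down to the vertex. If `X` missed a point at height `s` below one of its
points, the part of `X` above height `s` within a narrow sector bounded by rays that miss the
Cantor fan would be a proper clopen subset. -/
theorem down {c t s : ℝ} (hX : (t * c, t) ∈ X) (hs : 0 ≤ s) (hst : s ≤ t) :
    (s * c, s) ∈ X := by
  by_contra hc
  have hs0 : 0 < s := by
    rcases hs.eq_or_lt with rfl | hs
    · exact absurd h.vertex_mem (by simpa using hc)
    · exact hs
  have hst' : s < t := by
    rcases hst.eq_or_lt with rfl | hst
    · exact absurd hX hc
    · exact hst
  have hopen : IsOpen {d : ℝ | (s * d, s) ∉ X} :=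
    h.isCompact.isClosed.isOpen_compl.preimage (f := fun d : ℝ => (s * d, s)) (by fun_prop)
  obtain ⟨δ, hδ, hball⟩ := Metric.isOpen_iff.1 hopen c hc
  obtain ⟨p, hp, hpc⟩ := exists_notMem_cantorSet (show c - δ < c by linarith)
  obtain ⟨q, hq, hqc⟩ := exists_notMem_cantorSet (show c < c + δ by linarith)
  have hA : IsOpen {z : ℝ × ℝ | s < z.2 ∧ p * z.2 < z.1 ∧ z.1 < q * z.2} := by
    change IsOpen ({z : ℝ × ℝ | s < z.2} ∩ ({z | p * z.2 < z.1} ∩ {z | z.1 < q * z.2}))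
    exact (isOpen_lt (by fun_prop) (by fun_prop)).inter
      ((isOpen_lt (by fun_prop) (by fun_prop)).inter
        (isOpen_lt (by fun_prop) (by fun_prop)))
  have hB : IsOpen {z : ℝ × ℝ | z.2 < s ∨ z.1 < p * z.2 ∨ q * z.2 < z.1} := by
    change IsOpen ({z : ℝ × ℝ | z.2 < s} ∪ ({z | z.1 < p * z.2} ∪ {z | q * z.2 < z.1}))
    exact (isOpen_lt (by fun_prop) (by fun_prop)).union
      ((isOpen_lt (by fun_prop) (by fun_prop)).union
        (isOpen_lt (by fun_prop) (by fun_prop)))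
  have ht : 0 < t := hs0.trans hst'
  have hcov : X ⊆ {z : ℝ × ℝ | s < z.2 ∧ p * z.2 < z.1 ∧ z.1 < q * z.2} ∪
      {z : ℝ × ℝ | z.2 < s ∨ z.1 < p * z.2 ∨ q * z.2 < z.1} := by
    rintro z hz
    obtain ⟨d, hd, r, hr, rfl⟩ := h.subset_fan hz
    by_cases hrs : r < s
    · exact Or.inr (Or.inl hrs)
    have hr0 : 0 < r := by linarith
    rcases lt_trichotomy d p with hdp | rfl | hdp
    · exact Or.inr (Or.inr (Or.inl (by simp only; nlinarith)))
    · exact absurd hd hpc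
    rcases lt_trichotomy d q with hdq | rfl | hdq
    · refine Or.inl ⟨lt_of_le_of_ne (not_lt.1 hrs) ?_, by simp only; nlinarith,
        by simp only; nlinarith⟩
      rintro rfl
      refine hball (Metric.mem_ball.2 ?_) hz
      rw [Real.dist_eq, abs_lt]
      constructor <;> linarith [hp.1, hq.2]
    · exact absurd hd hqc
    · exact Or.inr (Or.inr (Or.inr (by simp only; nlinarith)))
  obtain ⟨z, hzX, ⟨h1, h2, h3⟩, h4⟩ := h.isPreconnected _ _ hA hB hcov
    ⟨_, hX, hst', by simp only; nlinarith [hp.2], by simp only; nlinarith [hq.1]⟩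
    ⟨_, h.vertex_mem, Or.inl hs0⟩
  rcases h4 with h4 | h4 | h4 <;> linarith

theorem mem_iff {c t : ℝ} (ht : 0 ≤ t) : (t * c, t) ∈ X ↔ t ≤ height X c := by
  have hbdd : BddAbove {t | 0 ≤ t ∧ (t * c, t) ∈ X} := ⟨1, fun t ht => (h.bounds ht.2).2.1⟩
  refine ⟨fun hX => le_csSup hbdd ⟨ht, hX⟩, fun hle => ?_⟩
  have hcl : IsClosed {t | 0 ≤ t ∧ (t * c, t) ∈ X} :=
    isClosed_Ici.inter (h.isCompact.isClosed.preimage (f := fun t : ℝ => (t * c, t)) (by fun_prop))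
  exact h.down (hcl.csSup_mem ⟨0, le_rfl, by simpa using h.vertex_mem⟩ hbdd).2 ht hle

theorem height_nonneg (c : ℝ) : 0 ≤ height X c :=
  (h.mem_iff le_rfl).1 (by simpa using h.vertex_mem)

theorem height_le_one (c : ℝ) : height X c ≤ 1 :=
  (h.bounds ((h.mem_iff (h.height_nonneg c)).2 le_rfl)).2.1

theorem isOpen_height_lt (t : ℝ) : IsOpen {c | height X c < t} := by
  rcases le_or_gt t 0 with ht | ht
  · convert! isOpen_empty
    ext c
    simpa using ht.trans (h.height_nonneg c)
  · have : {c | height X c < t} = (fun c : ℝ => (t * c, t)) ⁻¹' Xᶜ := by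
      ext c
      simp [h.mem_iff ht.le]
    rw [this]
    exact h.isCompact.isClosed.isOpen_compl.preimage (by fun_prop)

theorem base_subset : base X ⊆ cantorSet :=
  closure_minimal (fun _ ⟨_, ht, hX⟩ => (h.bounds hX).2.2 ht) isClosed_cantorSet

theorem compactSpace_base : CompactSpace (base X) :=
  isCompact_iff_compactSpace.1 (isCompact_cantorSet.of_isClosed_subset isClosed_closure h.base_subset)

theorem totallyDisconnectedSpace_base : TotallyDisconnectedSpace (base X) := by
  have : TotallyDisconnectedSpace cantorSet :=
    cantorSetHomeomorphNatToBool.symm.totallyDisconnectedSpace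
  have htd : IsTotallyDisconnected cantorSet := totallyDisconnectedSpace_subtype_iff.1 this
  exact totallyDisconnectedSpace_subtype_iff.2 fun s hs => htd s (hs.trans h.base_subset)

theorem nonempty_base : Nonempty (base X) := by
  obtain ⟨x, hx, y, hy, hxy⟩ := h.nondegenerate
  by_contra hne
  have key : ∀ z ∈ X, z = (0, 0) := by
    intro z hz
    obtain ⟨d, hd, r, hr, rfl⟩ := h.subset_fan hz
    rcases hr.1.eq_or_lt with rfl | hr0
    · simp
    · exact absurd ⟨⟨d, subset_closure ⟨r, hr0, hz⟩⟩⟩ hne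
  exact hxy ((key x hx).trans (key y hy).symm)

/-- The height function restricted to the base satisfies all the conditions of a Lelek function
except for density of the graph. -/
theorem isLelek_of (hl : ∀ (c : base X) (t : ℝ), 0 < t → t < height X c → ∀ U : Set (base X),
    IsOpen U → c ∈ U → ∀ ε > 0, ∃ x ∈ U, |height X x - t| < ε) :
    IsLelek fun c : base X => height X c where
  nonneg c := h.height_nonneg c
  le_one c := h.height_le_one c
  usc t := (h.isOpen_height_lt t).preimage continuous_subtype_val
  pos_dense U hU hne := by
    obtain ⟨V, hV, rfl⟩ := isOpen_induced_iff.1 hU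
    obtain ⟨⟨x, hx⟩, hxV⟩ := hne
    obtain ⟨y, hyV, t, ht, hty⟩ := mem_closure_iff.1 hx V hV hxV
    exact ⟨⟨y, subset_closure ⟨t, ht, hty⟩⟩, hyV, ht.trans_le ((h.mem_iff ht.le).1 hty)⟩
  lelek := hl

end IsFan

/-- The region between the zero section and the graph of the height function, of which `X` is
the quotient by the zero section. -/
def Region (X : Set (ℝ × ℝ)) : Set (base X × ℝ) := {p | 0 ≤ p.2 ∧ p.2 ≤ height X p.1}

namespace IsFan

variable {X : Set (ℝ × ℝ)} (h : IsFan X)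

include h

theorem isCompact_region : IsCompact (Region X) := by
  have := h.compactSpace_base
  have hcl : IsClosed (Region X) := by
    have : Region X = {p | 0 ≤ p.2} ∩
        (fun p : base X × ℝ => (p.2 * (p.1 : ℝ), p.2)) ⁻¹' X := by
      ext p
      exact and_congr_right fun hp => (h.mem_iff hp).symm
    rw [this]
    exact (isClosed_le continuous_const continuous_snd).inter
      (h.isCompact.isClosed.preimage (by fun_prop))
  refine (isCompact_univ.prod (isCompact_Icc (a := (0 : ℝ)) (b := 1))).of_isClosed_subset hcl ?_
  exact fun p hp => ⟨mem_univ _, hp.1, hp.2.trans (h.height_le_one _)⟩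

/-- A continuous bijection of the region that preserves the zero section descends to a
self-homeomorphism of the fan. -/
theorem exists_homeo (G : Region X → Region X) (hG : Continuous G) (hbij : Function.Bijective G)
    (h0 : ∀ p, (G p).1.2 = 0 ↔ p.1.2 = 0) (hne : ∃ p, p.1.2 ≠ 0 ∧ G p ≠ p) :
    ∃ k : X ≃ₜ X, ∃ x : X, k x ≠ x := by
  have := isCompact_iff_compactSpace.1 h.isCompact_region
  have := isCompact_iff_compactSpace.1 h.isCompact
  let π : Region X → X := fun p => ⟨(p.1.2 * (p.1.1 : ℝ), p.1.2), (h.mem_iff p.2.1).2 p.2.2⟩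
  have hπ : Continuous π := by
    refine Continuous.subtype_mk ?_ _
    fun_prop
  have hsurj : Function.Surjective π := by
    rintro ⟨z, hz⟩
    obtain ⟨d, hd, r, hr, rfl⟩ := h.subset_fan hz
    rcases hr.1.eq_or_lt with rfl | hr0
    · obtain ⟨c⟩ := h.nonempty_base
      exact ⟨⟨(c, 0), le_rfl, h.height_nonneg _⟩, by simp [π]⟩
    · exact ⟨⟨(⟨d, subset_closure ⟨r, hr0, hz⟩⟩, r), hr.1, (h.mem_iff hr.1).1 hz⟩, rfl⟩
  have hπeq : ∀ p q, π p = π q ↔ (p = q ∨ (p.1.2 = 0 ∧ q.1.2 = 0)) := by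
    rintro ⟨⟨⟨c, hc⟩, t⟩, hp⟩ ⟨⟨⟨d, hd⟩, s⟩, hq⟩
    simp only [π, Subtype.mk.injEq, Prod.mk.injEq]
    constructor
    · rintro ⟨h1, rfl⟩
      by_cases ht : t = 0
      · exact Or.inr ⟨ht, ht⟩
      · exact Or.inl ⟨mul_left_cancel₀ ht h1, rfl⟩
    · rintro (⟨rfl, rfl⟩ | ⟨rfl, rfl⟩) <;> simp
  have hquot : IsQuotientMap π := hπ.isClosedMap.isQuotientMap hπ hsurj
  have hfac : ∀ p q, π p = π q ↔ π (G p) = π (G q) := by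
    intro p q
    rw [hπeq, hπeq, h0, h0, hbij.1.eq_iff]
  choose σ hσ using hsurj
  let K : X → X := fun x => π (G (σ x))
  have hK : ∀ p, K (π p) = π (G p) := fun p => (hfac _ _).1 (hσ (π p))
  have hKc : Continuous K := by
    rw [hquot.continuous_iff, show K ∘ π = π ∘ G from funext hK]
    exact hπ.comp hG
  have hKb : Function.Bijective K := by
    constructor
    · intro x y hxy
      have := (hfac _ _).2 hxy
      rwa [hσ, hσ] at this
    · intro y
      obtain ⟨p, hp⟩ := hbij.2 (σ y)
      exact ⟨π p, by rw [hK, hp, hσ]⟩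
  obtain ⟨p, hp0, hp⟩ := hne
  refine ⟨Continuous.homeoOfEquivCompactToT2 (f := Equiv.ofBijective K hKb) hKc, π p, ?_⟩
  change K (π p) ≠ π p
  rw [hK, Ne, hπeq, not_or]
  exact ⟨hp, fun hc => hp0 hc.2⟩

/-- If the height function is a Lelek function, the legs can be permuted nontrivially. -/
theorem exists_homeo_of_isLelek (hl : IsLelek fun c : base X => height X c) :
    ∃ k : X ≃ₜ X, ∃ x : X, k x ≠ x := by
  have := h.compactSpace_base
  have := h.totallyDisconnectedSpace_base
  have := h.nonempty_base
  obtain ⟨g, α, hg, hgb, hα, hpos, heq, hne⟩ := hl.exists_map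
  obtain ⟨c, -, hc⟩ := hl.pos_dense univ isOpen_univ univ_nonempty
  refine h.exists_homeo (fun p => ⟨(g p.1.1, α p.1.1 * p.1.2),
    mul_nonneg (hpos _).le p.2.1, ?_⟩) ?_ ⟨?_, ?_⟩ ?_ ?_
  · simp only [heq]
    exact mul_le_mul_of_nonneg_left p.2.2 (hpos _).le
  · refine Continuous.subtype_mk ?_ _
    fun_prop
  · rintro ⟨⟨c, t⟩, hp⟩ ⟨⟨d, s⟩, hq⟩ he
    have h1 : g c = g d := congrArg (fun p : Region X => p.1.1) he
    have h2 : α c * t = α d * s := congrArg (fun p : Region X => p.1.2) he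
    obtain rfl := hgb.1 h1
    exact Subtype.ext (Prod.ext rfl (mul_left_cancel₀ (hpos _).ne' h2))
  · rintro ⟨⟨d, s⟩, hq⟩
    obtain ⟨c, rfl⟩ := hgb.2 d
    have hs : α c * (s / α c) = s := mul_div_cancel₀ _ (hpos c).ne'
    refine ⟨⟨(c, s / α c), div_nonneg hq.1 (hpos c).le, ?_⟩, ?_⟩
    · have := hq.2
      simp only [heq] at this
      rwa [div_le_iff₀' (hpos c)]
    · simp only [hs]
  · intro p
    simp [(hpos p.1.1).ne']
  · exact ⟨⟨(c, height X c), hc.le, le_rfl⟩, hc.ne', fun he =>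
      hne c (congrArg (fun p : Region X => p.1.1) he)⟩

/-- If near some `c` no leg has height within `ε` of `t < height X c`, points at height close to
`t` on legs close to `c` can be pushed upwards. -/
theorem exists_homeo_of_gap (c : base X) {t : ℝ} (ht : 0 < t) (htc : t < height X c) {δ ε : ℝ}
    (hδ : 0 < δ) (hε : 0 < ε)
    (hgap : ∀ d : base X, dist d c < δ → ε ≤ |height X d - t|) :
    ∃ k : X ≃ₜ X, ∃ x : X, k x ≠ x := by
  wlog hεt : ε ≤ t generalizing ε
  · exact this ht (fun d hd => (not_le.1 hεt).le.trans (hgap d hd)) le_rfl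
  let η : base X → ℝ := fun d => min (max 0 (δ - dist d c)) (1 / 2)
  let b : ℝ → ℝ := fun s => max 0 (ε - |s - t|)
  have hη0 : ∀ d, 0 ≤ η d := fun d => le_min (le_max_left _ _) (by norm_num)
  have hη1 : ∀ d, η d ≤ 1 / 2 := fun d => min_le_right _ _
  have hb0 : ∀ s, 0 ≤ b s := fun s => le_max_left _ _
  have hbz : b 0 = 0 := by
    simp only [b, zero_sub, abs_neg, abs_of_pos ht]
    exact max_eq_left (by linarith)
  have hblip : ∀ s r, |b s - b r| ≤ |s - r| := fun s r => by
    refine (abs_max_sub_max_le_max _ _ _ _).trans (max_le (by simp) ?_)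
    rw [sub_sub_sub_cancel_left, abs_sub_comm s r]
    refine (abs_abs_sub_abs_le (r - t) (s - t)).trans_eq ?_
    rw [sub_sub_sub_cancel_right]
  have hηc : Continuous η := by fun_prop
  have hbc : Continuous b := by fun_prop
  have hle : ∀ p : Region X, p.1.2 + η p.1.1 * b p.1.2 ≤ height X p.1.1 := by
    rintro ⟨⟨d, s⟩, hs0, hs⟩
    simp only at hs ⊢
    by_cases hd : dist d c < δ
    · by_cases hst : |s - t| < ε
      · have e1 : b s = ε - |s - t| := max_eq_right (by linarith)
        have e2 := hgap d hd
        rw [abs_lt] at hst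
        have e3 : t + ε ≤ height X d := by
          rcases le_abs.1 e2 with e2 | e2 <;> linarith [hst.1]
        have e4 : η d * b s ≤ ε - |s - t| := by
          rw [← e1]; nlinarith [hη0 d, hη1 d, hb0 s]
        linarith [le_abs_self (s - t)]
      · have e1 : b s = 0 := max_eq_left (by linarith)
        simpa [e1] using hs
    · have e1 : η d = 0 := by
        simp only [η]
        rw [max_eq_left (by linarith)]
        norm_num
      simpa [e1] using hs
  refine h.exists_homeo (fun p => ⟨(p.1.1, p.1.2 + η p.1.1 * b p.1.2),
    add_nonneg p.2.1 (mul_nonneg (hη0 _) (hb0 _)), hle p⟩) ?_ ⟨?_, ?_⟩ ?_ ?_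
  · refine Continuous.subtype_mk ?_ _
    fun_prop
  · rintro ⟨⟨d, s⟩, hp⟩ ⟨⟨d', r⟩, hq⟩ he
    obtain rfl : d = d' := congrArg (fun p : Region X => p.1.1) he
    have h2 : s + η d * b s = r + η d * b r := congrArg (fun p : Region X => p.1.2) he
    refine Subtype.ext (Prod.ext rfl ?_)
    change s = r
    have h3 : |s - r| ≤ 1 / 2 * |s - r| := by
      calc |s - r| = |η d * (b s - b r)| := by
            rw [abs_sub_comm]; congr 1; linarith
        _ = η d * |b s - b r| := by rw [abs_mul, abs_of_nonneg (hη0 d)]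
        _ ≤ 1 / 2 * |s - r| := mul_le_mul (hη1 d) (hblip s r) (abs_nonneg _) (by norm_num)
    have h4 : |s - r| = 0 := le_antisymm (by linarith) (abs_nonneg _)
    linarith [abs_eq_zero.1 h4]
  · rintro ⟨⟨d, s⟩, hs0, hs⟩
    have hcont : Continuous fun r => r + η d * b r := by fun_prop
    obtain ⟨r, hr, hrs⟩ := intermediate_value_Icc (h.height_nonneg d) hcont.continuousOn
      (show s ∈ Icc _ _ from ⟨by simpa [hbz] using hs0,
        hs.trans (le_add_of_nonneg_right (mul_nonneg (hη0 _) (hb0 _)))⟩)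
    exact ⟨⟨(d, r), hr.1, hr.2⟩, Subtype.ext (Prod.ext rfl hrs)⟩
  · rintro ⟨⟨d, s⟩, hs0, hs⟩
    simp only at hs0 ⊢
    refine ⟨fun he => ?_, fun he => by simp [he, hbz]⟩
    linarith [mul_nonneg (hη0 d) (hb0 s)]
  · refine ⟨⟨(c, t), ht.le, htc.le⟩, ht.ne', fun he => ?_⟩
    have h1 : t + η c * b t = t := congrArg (fun p : Region X => p.1.2) he
    have h2 : 0 < η c := by simp [η, hδ]
    have h3 : 0 < b t := by simp [b, hε]
    linarith [mul_pos h2 h3]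

theorem not_rigid : ∃ k : X ≃ₜ X, ∃ x : X, k x ≠ x := by
  by_cases hl : ∀ (c : base X) (t : ℝ), 0 < t → t < height X c → ∀ U : Set (base X),
      IsOpen U → c ∈ U → ∀ ε > 0, ∃ x ∈ U, |height X x - t| < ε
  · exact h.exists_homeo_of_isLelek (h.isLelek_of hl)
  · push Not at hl
    obtain ⟨c, t, ht, htc, U, hU, hcU, ε, hε, hgap⟩ := hl
    obtain ⟨δ, hδ, hball⟩ := Metric.isOpen_iff.1 hU c hcU
    exact h.exists_homeo_of_gap c ht htc hδ hε fun d hd => hgap d (hball hd)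

end IsFan

/-- No smooth fan is rigid: every smooth fan admits a self-homeomorphism
which is not the identity. -/
theorem no_smooth_fan_is_rigid (X : Set (ℝ × ℝ)) (hX : IsSmoothFan X) :
    ∃ h : X ≃ₜ X, ∃ x : X, h x ≠ x := by
  have hfan : IsFan X :=
    ⟨hX.subset_fan, hX.isCompact, hX.isConnected.isPreconnected, hX.vertex_mem, hX.nondegenerate⟩
  exact hfan.not_rigid

end SmoothFanPaper
end
end
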